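/- Let Γ = ℤ^4 ⋊ ℤ/4 where the generator of ℤ/4 acts on ℤ^4 by the matrix [[-1,0,0,0],[0,0,0,-1],[0,1,0,1],[0,0,-1,1]]. Then H^1(Γ,ℤ) ≅ ℤ; H^2(Γ,ℤ) ≅ ℤ ⊕ ℤ/4 ⊕ ℤ/2; H^3(Γ,ℤ) ≅ ℤ ⊕ ℤ/4 ⊕ ℤ/2; and H^i(Γ,ℤ) ≅ ℤ/4 ⊕ (ℤ/2)^3 for all i ≥ 4. -/

import Mathlib

open Matrix

namespace Crystal

/-- The lattice `ℤ^n`, written multiplicatively so that it can be a factor of a semidirect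
product of groups. -/
abbrev Lat (n : ℕ) : Type := Multiplicative (Fin n → ℤ)

/-- The invertible integer matrix determined by `M` with `M ^ (m + 1) = 1`. -/
def matUnit {n : ℕ} (M : Matrix (Fin n) (Fin n) ℤ) (m : ℕ) (hm : M ^ (m + 1) = 1) :
    (Matrix (Fin n) (Fin n) ℤ)ˣ :=
  ⟨M, M ^ m, by rw [← pow_succ']; exact hm, by rw [← pow_succ]; exact hm⟩

/-- Linear automorphisms of `ℤ^n` as multiplicative automorphisms of the multiplicative
version of `ℤ^n`. -/
def linToAut (n : ℕ) : ((Fin n → ℤ) ≃ₗ[ℤ] (Fin n → ℤ)) →* MulAut (Lat n) :=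
  MonoidHom.mk' (fun e => AddEquiv.toMultiplicative e.toAddEquiv) (fun _ _ => rfl)

/-- An invertible integer matrix acts on the (multiplicative) lattice `ℤ^n` by (left)
matrix-vector multiplication. -/
def glToAut (n : ℕ) : (Matrix (Fin n) (Fin n) ℤ)ˣ →* MulAut (Lat n) :=
  (linToAut n).comp
    ((LinearMap.GeneralLinearGroup.generalLinearEquiv ℤ (Fin n → ℤ)).toMonoidHom.comp
      (Matrix.GeneralLinearGroup.toLin).toMonoidHom)

/-- The homomorphism from `ℤ/m` (written multiplicatively) to a group `G` sending the
generator `1` to a chosen element `α` satisfying `α ^ m = 1`. -/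
def zmodHom {G : Type*} [Group G] (m : ℕ) [NeZero m] (α : G) (hα : α ^ m = 1) :
    Multiplicative (ZMod m) →* G :=
  MonoidHom.mk' (fun g => α ^ (g.toAdd.val)) (by
    intro a b
    show α ^ (ZMod.val (a.toAdd + b.toAdd)) = α ^ (ZMod.val a.toAdd) * α ^ (ZMod.val b.toAdd)
    rw [ZMod.val_add, ← pow_eq_pow_mod _ hα, pow_add])

/-- The action of `ℤ/q` on the lattice `ℤ^n` in which the generator `1` of `ℤ/q` acts by left
multiplication by the integer matrix `M`; `M` is required to satisfy `M ^ q = 1`. -/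
def matAction {n : ℕ} (q : ℕ) [NeZero q] (M : Matrix (Fin n) (Fin n) ℤ)
    (hq : M ^ q = 1) : Multiplicative (ZMod q) →* MulAut (Lat n) :=
  zmodHom q (glToAut n (matUnit M (q - 1) (by
      rwa [Nat.sub_add_cancel (Nat.one_le_iff_ne_zero.2 (NeZero.ne q))])))
    (by
      rw [← map_pow]
      convert map_one (glToAut n)
      ext i j
      rw [Units.val_pow_eq_pow_val]
      simp [matUnit, hq])

/-- The crystallographic group `ℤ^n ⋊ ℤ/q` in which the generator `1` of `ℤ/q` acts on the
lattice `ℤ^n` by left multiplication by the integer matrix `M` (with `M ^ q = 1`). -/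
abbrev Crys {n : ℕ} (q : ℕ) [NeZero q] (M : Matrix (Fin n) (Fin n) ℤ) (hq : M ^ q = 1) : Type :=
  SemidirectProduct (Lat n) (Multiplicative (ZMod q)) (matAction q M hq)


open CategoryTheory groupCohomology

variable {k : Type} [CommRing k]

lemma comp_contractNth {G H : Type*} [Monoid G] [Monoid H] (f : G →* H) {n : ℕ}
    (j : Fin (n + 1)) (g : Fin (n + 1) → G) (i : Fin n) :
    f (Fin.contractNth j (· * ·) g i) = Fin.contractNth j (· * ·) (fun l => f (g l)) i := by
  rcases lt_trichotomy (i : ℕ) j with h | h | h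
  · rw [Fin.contractNth_apply_of_lt _ _ _ _ h, Fin.contractNth_apply_of_lt _ _ _ _ h]
  · rw [Fin.contractNth_apply_of_eq _ _ _ _ h, Fin.contractNth_apply_of_eq _ _ _ _ h,
      _root_.map_mul]
  · rw [Fin.contractNth_apply_of_gt _ _ _ _ h, Fin.contractNth_apply_of_gt _ _ _ _ h]

/-- The map of inhomogeneous cochain complexes induced (contravariantly in the group,
covariantly in the coefficients) by a group homomorphism `f : H →* G` together with a
compatible linear map `τ : A → B` of coefficients. -/
def cochainsMap {G H : Type} [Group G] [Group H] (A : Rep k G) (B : Rep k H)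
    (f : H →* G) (τ : A →ₗ[k] B)
    (hcomp : ∀ (h : H) (a : A), τ (A.ρ (f h) a) = B.ρ h (τ a)) :
    inhomogeneousCochains A ⟶ inhomogeneousCochains B where
  f n := ModuleCat.ofHom
    { toFun := fun F v => τ (F (fun i => f (v i)))
      map_add' := fun x y => by funext v; simp
      map_smul' := fun r x => by funext v; simp }
  comm' i j hij := by
    have hij' : i + 1 = j := hij
    subst hij'
    rw [inhomogeneousCochains.d_def, inhomogeneousCochains.d_def]
    ext F v
    simp only [ModuleCat.hom_comp, LinearMap.comp_apply]
    show (inhomogeneousCochains.d B i).hom (fun w => τ (F (fun l => f (w l)))) v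
      = τ ((inhomogeneousCochains.d A i).hom F (fun l => f (v l)))
    simp only [inhomogeneousCochains.d_hom_apply, map_add, map_sum, _root_.map_smul]
    congr 1
    · exact (hcomp (v 0) _).symm
    · refine Finset.sum_congr rfl fun j' _ => ?_
      have hc : (fun l => f (j'.contractNth (· * ·) v l))
          = j'.contractNth (· * ·) (fun l => f (v l)) := by
        funext l
        exact comp_contractNth f j' v l
      rw [hc]

lemma cochainsMap_eq_id {G : Type} [Group G] (A : Rep k G) (f : G →* G) (τ : A →ₗ[k] A)
    (hcomp : ∀ (h : G) (a : A), τ (A.ρ (f h) a) = A.ρ h (τ a))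
    (hf : ∀ x, f x = x) (hτ : ∀ a, τ a = a) :
    cochainsMap A A f τ hcomp = 𝟙 _ := by
  apply HomologicalComplex.Hom.ext
  funext n
  ext F v
  show τ (F (fun i => f (v i))) = F v
  simp only [hf, hτ]

lemma cochainsMap_comp {G H K : Type} [Group G] [Group H] [Group K]
    (A : Rep k G) (B : Rep k H) (C : Rep k K)
    (f₁ : H →* G) (τ₁ : A →ₗ[k] B) (h₁ : ∀ (h : H) (a : A), τ₁ (A.ρ (f₁ h) a) = B.ρ h (τ₁ a))
    (f₂ : K →* H) (τ₂ : B →ₗ[k] C) (h₂ : ∀ (h : K) (a : B), τ₂ (B.ρ (f₂ h) a) = C.ρ h (τ₂ a))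
    (f₃ : K →* G) (τ₃ : A →ₗ[k] C) (h₃ : ∀ (h : K) (a : A), τ₃ (A.ρ (f₃ h) a) = C.ρ h (τ₃ a))
    (hf : ∀ x, f₁ (f₂ x) = f₃ x) (hτ : ∀ a, τ₂ (τ₁ a) = τ₃ a) :
    cochainsMap A B f₁ τ₁ h₁ ≫ cochainsMap B C f₂ τ₂ h₂ = cochainsMap A C f₃ τ₃ h₃ := by
  apply HomologicalComplex.Hom.ext
  funext n
  ext F v
  show τ₂ (τ₁ (F (fun i => f₁ (f₂ (v i))))) = τ₃ (F (fun i => f₃ (v i)))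
  simp only [hf]
  exact hτ _

/-- Given an action `φ` of a group `G` on a group `L` and a representation `ψ` of `G` on a
`k`-module `V`, this is `H^j(L, V)` (with `L` acting trivially on the coefficients `V`),
endowed with the `G`-action functorially induced by the action of `G` on `L` and on `V`:
`g` acts via the conjugation automorphism `φ g⁻¹` of `L` and via `ψ g` on `V`. -/
noncomputable def cohRep {G L V : Type} [Group G] [Group L] [AddCommGroup V] [Module k V]
    (φ : G →* MulAut L) (ψ : Representation k G V) (j : ℕ) : Rep k G :=
  Rep.of (X := groupCohomology (Rep.trivial k L V) j)
    { toFun := fun g => (HomologicalComplex.homologyMap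
        (cochainsMap (Rep.trivial k L V) (Rep.trivial k L V) (φ g⁻¹).toMonoidHom (ψ g)
          (fun _ _ => rfl)) j).hom
      map_one' := by
        have h := cochainsMap_eq_id (Rep.trivial k L V) (φ 1⁻¹).toMonoidHom (ψ 1)
          (fun _ _ => rfl) (fun x => by simp) (fun a => by simp)
        rw [h]
        exact congrArg ModuleCat.Hom.hom (HomologicalComplex.homologyMap_id _ j)
      map_mul' := fun g₁ g₂ => by
        have h := cochainsMap_comp (Rep.trivial k L V) (Rep.trivial k L V) (Rep.trivial k L V)
          (φ g₂⁻¹).toMonoidHom (ψ g₂) (fun _ _ => rfl)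
          (φ g₁⁻¹).toMonoidHom (ψ g₁) (fun _ _ => rfl)
          (φ (g₁ * g₂)⁻¹).toMonoidHom (ψ (g₁ * g₂)) (fun _ _ => rfl)
          (fun x => by simp [_root_.mul_inv_rev]) (fun a => by simp)
        rw [← h, HomologicalComplex.homologyMap_comp]
        rfl }


/-- `H^i(G, H^j(L, ℤ))`: the `i`-th cohomology of the cyclic group `ℤ/q` with coefficients in
the `j`-th cohomology of the lattice `ℤ^n` (with trivial `ℤ` coefficients), where the
`ℤ/q`-action on `H^j(ℤ^n, ℤ)` is the one functorially induced by the matrix action on the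
lattice. -/
noncomputable abbrev cohOfCoh {n : ℕ} (q : ℕ) [NeZero q] (M : Matrix (Fin n) (Fin n) ℤ)
    (hq : M ^ q = 1) (i j : ℕ) : ModuleCat ℤ :=
  groupCohomology
    (cohRep (matAction q M hq) (1 : Representation ℤ (Multiplicative (ZMod q)) ℤ) j) i

/-- `H^k(Γ, ℤ)` for `Γ = ℤ^n ⋊ ℤ/q`, with trivial coefficients `ℤ`. -/
noncomputable abbrev cohCrys {n : ℕ} (q : ℕ) [NeZero q] (M : Matrix (Fin n) (Fin n) ℤ)
    (hq : M ^ q = 1) (k : ℕ) : ModuleCat ℤ :=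
  groupCohomology (Rep.trivial ℤ (Crys q M hq) ℤ) k

end Crystal

/-- The holonomy matrix. -/
def holM : Matrix (Fin 4) (Fin 4) ℤ := !![-1, 0, 0, 0; 0, 0, 0, -1; 0, 1, 0, 1; 0, 0, -1, 1]

lemma holM_pow : holM ^ 4 = 1 := by decide

/-- `H^k(ℤ^4 ⋊ ℤ/4, ℤ)`, where the generator of `ℤ/4` acts on `ℤ^4` by left
multiplication by the matrix `holM`. -/
noncomputable abbrev H (k : ℕ) : ModuleCat ℤ := Crystal.cohCrys 4 holM holM_pow k

/-- `H^i(ℤ/4, H^j(ℤ^4, ℤ))`, with the functorially induced action on coefficients. -/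
noncomputable abbrev Hc (i j : ℕ) : ModuleCat ℤ := Crystal.cohOfCoh 4 holM holM_pow i j

/-!
In suitable coordinates the generator of `ℤ/4` acts on `ℝ⁴` as a reflection of the line `x₀`, the
identity of the line `x₁` and a quarter turn of the plane `(x₂, x₃)`, so `Γ` preserves a cubical
structure on `ℝ⁴`. The product of this cubical complex with the periodic resolution of `ℤ/4` is
contractible and `Γ` permutes its cells freely up to sign, which gives a free resolution of `ℤ`.

The lattice has two orbits of cells in the direction `x₀` and sixteen in `ℝ³`. The two faces of an
edge in the direction `x₀` lie in the same orbit and cancel, while the reflection changes the sign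
of the edge. Hence the invariant cochains split as `C(1)ⁿ⁺¹ × C(-1)ⁿ`, where `C(χ)` is the double
complex of `ℤ/4` with coefficients in the cochains on `ℝ³` twisted by `χ = ±1`. As the cells of
`ℝ³` have dimension at most three, `C(χ)` is eventually 2-periodic, which leaves finitely many
explicit computations over `ℤ`.
-/

universe u

open CategoryTheory

/-- `p : M →+ Q` identifies the homology at `M` of `f : L →+ M` followed by `g : M →+ N` with
`Q`. -/
structure IsHomologyMap {L M N Q : Type*} [AddCommGroup L] [AddCommGroup M] [AddCommGroup N]
    [AddCommGroup Q] (f : L →+ M) (g : M →+ N) (p : M →+ Q) : Prop where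
  apply_boundary : ∀ y, p (f y) = 0
  exists_primitive : ∀ x, g x = 0 → p x = 0 → ∃ y, f y = x
  exists_cycle : ∀ q, ∃ x, g x = 0 ∧ p x = q

namespace IsHomologyMap

variable {L M N Q L' M' N' Q' : Type*} [AddCommGroup L] [AddCommGroup M] [AddCommGroup N]
  [AddCommGroup Q] [AddCommGroup L'] [AddCommGroup M'] [AddCommGroup N'] [AddCommGroup Q']
  {f : L →+ M} {g : M →+ N} {p : M →+ Q} {f' : L' →+ M'} {g' : M' →+ N'} {p' : M' →+ Q'}

theorem comp_addEquiv (h : IsHomologyMap f g p) (eL : L' ≃+ L) (eM : M' ≃+ M) (eN : N' ≃+ N)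
    (hf : ∀ y, eM (f' y) = f (eL y)) (hg : ∀ x, eN (g' x) = g (eM x)) :
    IsHomologyMap f' g' (p.comp eM) where
  apply_boundary y := by simp [hf, h.apply_boundary]
  exists_primitive x hgx hpx := by
    obtain ⟨y, hy⟩ := h.exists_primitive (eM x) (by rw [← hg, hgx, map_zero]) hpx
    exact ⟨eL.symm y, eM.injective (by rw [hf, eL.apply_symm_apply, hy])⟩
  exists_cycle q := by
    obtain ⟨x, hgx, hpx⟩ := h.exists_cycle q
    exact ⟨eM.symm x, eN.injective (by rw [hg, eM.apply_symm_apply, hgx, map_zero]), by simp [hpx]⟩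

theorem prodMap (h : IsHomologyMap f g p) (h' : IsHomologyMap f' g' p') :
    IsHomologyMap (f.prodMap f') (g.prodMap g') (p.prodMap p') where
  apply_boundary y := Prod.ext (h.apply_boundary y.1) (h'.apply_boundary y.2)
  exists_primitive x hgx hpx := by
    obtain ⟨y, hy⟩ := h.exists_primitive x.1 (congrArg Prod.fst hgx) (congrArg Prod.fst hpx)
    obtain ⟨y', hy'⟩ := h'.exists_primitive x.2 (congrArg Prod.snd hgx) (congrArg Prod.snd hpx)
    exact ⟨(y, y'), Prod.ext hy hy'⟩
  exists_cycle q := by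
    obtain ⟨x, hgx, hpx⟩ := h.exists_cycle q.1
    obtain ⟨x', hgx', hpx'⟩ := h'.exists_cycle q.2
    exact ⟨(x, x'), Prod.ext hgx hgx', Prod.ext hpx hpx'⟩

theorem nonempty_homology_addEquiv {k : Type u} [Ring k]
    {S : ShortComplex (ModuleCat.{u} k)} {Q : Type*} [AddCommGroup Q] {p : S.X₂ →+ Q}
    (h : IsHomologyMap S.f.hom.toAddMonoidHom S.g.hom.toAddMonoidHom p) :
    Nonempty (S.homology ≃+ Q) := by
  let q : LinearMap.ker S.g.hom →+ Q := p.comp (LinearMap.ker S.g.hom).subtype.toAddMonoidHom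
  have surjective : Function.Surjective q := fun y ↦
    let ⟨x, hgx, hpx⟩ := h.exists_cycle y
    ⟨⟨x, hgx⟩, hpx⟩
  have range_eq_ker : (LinearMap.range S.moduleCatToCycles).toAddSubgroup = q.ker := by
    ext ⟨x, hgx⟩
    constructor
    · rintro ⟨y, hy⟩
      rw [AddMonoidHom.mem_ker, ← hy]
      exact h.apply_boundary y
    · intro hpx
      obtain ⟨y, hy⟩ := h.exists_primitive x hgx hpx
      exact ⟨y, Subtype.ext hy⟩
  exact ⟨S.moduleCatHomologyIso.toLinearEquiv.toAddEquiv.trans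
    ((QuotientAddGroup.quotientAddEquivOfEq range_eq_ker).trans
      (QuotientAddGroup.quotientKerEquivOfSurjective q surjective))⟩

end IsHomologyMap

/-- A resolution of the trivial `k[Γ]`-module `k` by representations `V n` on which `Γ` permutes
a `k`-basis freely, the orbits of basis vectors being indexed by `I n`. -/
structure FreeResolution (k : Type u) [CommRing k] (Γ : Type u) [Group Γ] where
  V : ℕ → Type u
  [addCommGroup : ∀ n, AddCommGroup (V n)]
  [module : ∀ n, Module k (V n)]
  ρ : ∀ n, Representation k Γ (V n)
  d : ∀ n, V (n + 1) →ₗ[k] V n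
  d_equivariant : ∀ n g x, d n (ρ (n + 1) g x) = ρ n g (d n x)
  ε : V 0 →ₗ[k] k
  ε_invariant : ∀ g x, ε (ρ 0 g x) = ε x
  ε_surjective : Function.Surjective ε
  ε_d : ∀ x, ε (d 0 x) = 0
  d_d : ∀ n x, d n (d (n + 1) x) = 0
  exact_zero : ∀ x, ε x = 0 → ∃ y, d 0 y = x
  exact_succ : ∀ n x, d n x = 0 → ∃ y, d (n + 1) y = x
  I : ℕ → Type u
  basis : ∀ n, Module.Basis (Γ × I n) k (V n)
  ρ_basis : ∀ n g h i, ρ n g (basis n (h, i)) = basis n (g * h, i)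

namespace FreeResolution

attribute [instance] addCommGroup module

variable {k : Type u} [CommRing k] {Γ : Type u} [Group Γ] (P : FreeResolution k Γ)

/-- The `n`-th module of the resolution as an object of the category of representations. -/
noncomputable def rep (n : ℕ) : Rep k Γ := Rep.of (P.ρ n)

/-- The morphism out of `P.rep n` with prescribed values on the free generators. -/
noncomputable def lift (n : ℕ) (A : Rep.{u} k Γ) (F : P.I n → A) : P.rep n ⟶ A :=
  Rep.ofHom (σ := A.ρ) <| LinearMap.intertwiningMap_of_isIntertwiningMap (ρ := P.ρ n) (σ := A.ρ)
    (f := (P.basis n).constr k fun p ↦ A.ρ p.1 (F p.2)) fun g v ↦ by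
      have comm : (P.basis n).constr k (fun p ↦ A.ρ p.1 (F p.2)) ∘ₗ P.ρ n g =
          A.ρ g ∘ₗ (P.basis n).constr k fun p ↦ A.ρ p.1 (F p.2) :=
        (P.basis n).ext fun ⟨h, i⟩ ↦ by simp [P.ρ_basis]
      exact LinearMap.congr_fun comm v

theorem lift_basis (n : ℕ) (A : Rep.{u} k Γ) (F : P.I n → A) (g : Γ) (i : P.I n) :
    (P.lift n A F).hom (P.basis n (g, i)) = A.ρ g (F i) :=
  (P.basis n).constr_basis k (fun p ↦ A.ρ p.1 (F p.2)) (g, i)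

theorem hom_ext {n : ℕ} {A : Rep.{u} k Γ} {f g : P.rep n ⟶ A}
    (h : ∀ i, f.hom (P.basis n (1, i)) = g.hom (P.basis n (1, i))) : f = g := by
  apply Rep.hom_injective
  apply Representation.IntertwiningMap.ext
  refine (P.basis n).ext fun ⟨γ, i⟩ ↦ ?_
  have basis_eq : (P.rep n).ρ γ (P.basis n (1, i)) = P.basis n (γ, i) :=
    (P.ρ_basis n γ 1 i).trans (by rw [mul_one])
  have hf := Rep.hom_comm_apply f γ (P.basis n (1, i))
  have hg := Rep.hom_comm_apply g γ (P.basis n (1, i))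
  rw [basis_eq] at hf hg
  exact hf.trans ((congrArg _ (h i)).trans hg.symm)

instance projective_rep (n : ℕ) : Projective (P.rep n) where
  factors {E X} f e he := by
    rw [Rep.epi_iff_surjective] at he
    choose F hF using fun i ↦ he (f.hom (P.basis n (1, i)))
    refine ⟨P.lift n E F, P.hom_ext fun i ↦ ?_⟩
    have lift_one := P.lift_basis n E F 1 i
    rw [map_one] at lift_one
    rw [Rep.hom_comp]
    exact (congrArg e.hom lift_one).trans (hF i)

/-- The differential as a morphism of representations. -/
noncomputable def dHom (n : ℕ) : P.rep (n + 1) ⟶ P.rep n :=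
  Rep.ofHom <| LinearMap.intertwiningMap_of_isIntertwiningMap
    (f := P.d n) (ρ := P.ρ (n + 1)) (σ := P.ρ n) (P.d_equivariant n)

/-- The augmentation as a morphism of representations. -/
noncomputable def εHom : P.rep 0 ⟶ Rep.trivial k Γ k :=
  Rep.ofHom <| LinearMap.intertwiningMap_of_isIntertwiningMap
    (f := P.ε) (ρ := P.ρ 0) (σ := Representation.trivial k Γ k) P.ε_invariant

/-- The unaugmented chain complex of representations. -/
noncomputable def complex : ChainComplex (Rep k Γ) ℕ :=
  ChainComplex.of P.rep P.dHom fun n ↦ by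
    ext x
    exact P.d_d n x

theorem complex_d (n : ℕ) : P.complex.d (n + 1) n = P.dHom n := ChainComplex.of_d _ _ _

theorem complex_d_apply (n : ℕ) (x : P.V (n + 1)) : (P.complex.d (n + 1) n).hom x = P.d n x :=
  congrArg (fun f : P.rep (n + 1) ⟶ P.rep n ↦ f.hom x) (P.complex_d n)

/-- The augmentation as a chain map to the trivial representation in degree zero. -/
noncomputable def augmentation :
    P.complex ⟶ (ChainComplex.single₀ (Rep k Γ)).obj (Rep.trivial k Γ k) :=
  (P.complex.toSingle₀Equiv _).symm ⟨P.εHom, by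
    rw [complex_d]
    ext x
    exact P.ε_d x⟩

theorem quasiIsoAt_augmentation_zero : QuasiIsoAt P.augmentation 0 := by
  rw [augmentation, ChainComplex.quasiIsoAt₀_iff,
    ShortComplex.quasiIso_iff_of_zeros' _ rfl rfl rfl]
  constructor
  · apply (forget₂ _ (ModuleCat k)).reflects_exact_of_faithful
    rw [ShortComplex.moduleCat_exact_iff]
    intro x hx
    obtain ⟨y, hy⟩ := P.exact_zero x (by simpa [ChainComplex.toSingle₀Equiv] using! hx)
    exact ⟨y, (P.complex_d_apply 0 y).trans hy⟩
  · rw [Rep.epi_iff_surjective]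
    intro x
    obtain ⟨y, hy⟩ := P.ε_surjective x
    exact ⟨y, by simpa [ChainComplex.toSingle₀Equiv] using! hy⟩

theorem quasiIsoAt_augmentation_succ (n : ℕ) : QuasiIsoAt P.augmentation (n + 1) := by
  rw [quasiIsoAt_iff_exactAt' (hL := ChainComplex.exactAt_succ_single_obj ..),
    HomologicalComplex.exactAt_iff' _ (n + 2) (n + 1) n (by simp) (by simp)]
  apply (forget₂ _ (ModuleCat k)).reflects_exact_of_faithful
  rw [ShortComplex.moduleCat_exact_iff]
  intro x hx
  obtain ⟨y, hy⟩ := P.exact_succ n x ((P.complex_d_apply n x).symm.trans hx)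
  exact ⟨y, (P.complex_d_apply (n + 1) y).trans hy⟩

/-- `P` as a projective resolution in the sense of Mathlib. -/
noncomputable def toProjectiveResolution : ProjectiveResolution (Rep.trivial k Γ k) where
  complex := P.complex
  projective := P.projective_rep
  π := P.augmentation
  quasiIso := ⟨fun n ↦ n.casesOn P.quasiIsoAt_augmentation_zero P.quasiIsoAt_augmentation_succ⟩

/-- The `Γ`-invariant functional on the `n`-chains with prescribed values on the generators. -/
noncomputable def cochain (n : ℕ) : (P.I n → k) →ₗ[k] P.V n →ₗ[k] k :=
  ((P.basis n).constr k).toLinearMap ∘ₗ LinearMap.funLeft k k Prod.snd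

theorem cochain_basis (n : ℕ) (F : P.I n → k) (g : Γ) (i : P.I n) :
    P.cochain n F (P.basis n (g, i)) = F i :=
  (P.basis n).constr_basis k (fun p ↦ F p.2) (g, i)

/-- The coboundary on cochains given by their values on the generators. -/
noncomputable def δ (n : ℕ) : (P.I n → k) →+ (P.I (n + 1) → k) :=
  LinearMap.toAddMonoidHom <| LinearMap.pi fun i ↦
    LinearMap.applyₗ (P.d n (P.basis (n + 1) (1, i))) ∘ₗ P.cochain n

/-- Equivariant cochains with trivial coefficients are determined by their values on generators. -/
noncomputable def homEquiv (n : ℕ) : (P.rep n ⟶ Rep.trivial k Γ k) ≃+ (P.I n → k) where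
  toFun f i := f.hom (P.basis n (1, i))
  invFun F := P.lift n (Rep.trivial k Γ k) F
  left_inv _ := P.hom_ext fun i ↦ P.lift_basis n (Rep.trivial k Γ k) _ 1 i
  right_inv F := funext fun i ↦ P.lift_basis n (Rep.trivial k Γ k) F 1 i
  map_add' _ _ := rfl

theorem homEquiv_comp_dHom (n : ℕ) (f : P.rep n ⟶ Rep.trivial k Γ k) :
    P.homEquiv (n + 1) (P.dHom n ≫ f) = P.δ n (P.homEquiv n f) := by
  obtain ⟨F, rfl⟩ := (P.homEquiv n).symm.surjective f
  rw [AddEquiv.apply_symm_apply]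
  rfl

/-- The three-term piece of the complex of equivariant cochains computing `Hⁿ⁺¹`. -/
noncomputable def cochainShortComplex (n : ℕ) : ShortComplex (ModuleCat k) :=
  (P.complex.linearYonedaObj k (Rep.trivial k Γ k)).sc' n (n + 1) (n + 2)

theorem homEquiv_cochainShortComplex_f (n : ℕ) (f : P.rep n ⟶ Rep.trivial k Γ k) :
    P.homEquiv (n + 1) ((P.cochainShortComplex n).f.hom f) = P.δ n (P.homEquiv n f) := by
  rw [← homEquiv_comp_dHom, ← complex_d]
  rfl

theorem homEquiv_cochainShortComplex_g (n : ℕ) (f : P.rep (n + 1) ⟶ Rep.trivial k Γ k) :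
    P.homEquiv (n + 2) ((P.cochainShortComplex n).g.hom f) =
      P.δ (n + 1) (P.homEquiv (n + 1) f) := by
  rw [← homEquiv_comp_dHom, ← complex_d]
  rfl

theorem nonempty_groupCohomology_addEquiv {n : ℕ} {Q : Type*} [AddCommGroup Q]
    {p : (P.I (n + 1) → k) →+ Q} (hp : IsHomologyMap (P.δ n) (P.δ (n + 1)) p) :
    Nonempty (groupCohomology (Rep.trivial k Γ k) (n + 1) ≃+ Q) := by
  have hp' : IsHomologyMap (P.cochainShortComplex n).f.hom.toAddMonoidHom
      (P.cochainShortComplex n).g.hom.toAddMonoidHom (p.comp (P.homEquiv (n + 1)).toAddMonoidHom) :=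
    hp.comp_addEquiv (P.homEquiv n) (P.homEquiv (n + 1)) (P.homEquiv (n + 2))
      (P.homEquiv_cochainShortComplex_f n) (P.homEquiv_cochainShortComplex_g n)
  obtain ⟨e⟩ := hp'.nonempty_homology_addEquiv
  have iso : groupCohomology (Rep.trivial k Γ k) (n + 1) ≅ (P.cochainShortComplex n).homology :=
    groupCohomologyIso _ _ P.toProjectiveResolution ≪≫
      (P.complex.linearYonedaObj k (Rep.trivial k Γ k)).homologyIsoSc' n (n + 1) (n + 2)
        (by simp) (by simp)
  exact ⟨iso.toLinearEquiv.toAddEquiv.trans e⟩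

end FreeResolution

/-! ### Contracted complexes -/

open Finsupp

section FinsuppEnd

variable {X Y : Type*}

theorem finsuppEnd_ext {f g : Module.End ℤ (X →₀ ℤ)}
    (h : ∀ x, f (single x 1) = g (single x 1)) : f = g :=
  Finsupp.lhom_ext' fun x ↦ LinearMap.ext_ring (h x)

/-- The external product `(X →₀ ℤ) × (Y →₀ ℤ) → (X × Y →₀ ℤ)` of chains. -/
noncomputable def cross : (X →₀ ℤ) →ₗ[ℤ] (Y →₀ ℤ) →ₗ[ℤ] (X × Y →₀ ℤ) :=
  (TensorProduct.mk ℤ (X →₀ ℤ) (Y →₀ ℤ)).compr₂ (finsuppTensorFinsupp' ℤ X Y).toLinearMap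

@[simp]
theorem cross_single (x : X) (y : Y) :
    cross (single x 1) (single y 1) = single (x, y) (1 : ℤ) := by
  simp [cross]

theorem cross_apply_mk (u : X →₀ ℤ) (v : Y →₀ ℤ) (x : X) (y : Y) :
    cross u v (x, y) = u x * v y := by
  simp [cross]

/-- The endomorphism `f ⊗ g` of `X × Y →₀ ℤ`, without Koszul signs. -/
noncomputable def tensorEnd (f : Module.End ℤ (X →₀ ℤ)) (g : Module.End ℤ (Y →₀ ℤ)) :
    Module.End ℤ (X × Y →₀ ℤ) :=
  (finsuppTensorFinsupp' ℤ X Y).conj (TensorProduct.map f g)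

section

variable (f f' : Module.End ℤ (X →₀ ℤ)) (g g' : Module.End ℤ (Y →₀ ℤ))

@[simp]
theorem tensorEnd_single (x : X) (y : Y) :
    tensorEnd f g (single (x, y) 1) = cross (f (single x 1)) (g (single y 1)) := by
  have : (finsuppTensorFinsupp' ℤ X Y).symm (single (x, y) 1) = single x 1 ⊗ₜ single y 1 := by
    rw [LinearEquiv.symm_apply_eq, finsuppTensorFinsupp'_single_tmul_single, one_mul]
  simp [tensorEnd, LinearEquiv.conj_apply, this, cross]

theorem tensorEnd_mul : tensorEnd (f * f') (g * g') = tensorEnd f g * tensorEnd f' g' := by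
  rw [tensorEnd, TensorProduct.map_mul]
  exact LinearEquiv.conj_comp _ _ _

theorem tensorEnd_one : tensorEnd (1 : Module.End ℤ (X →₀ ℤ)) (1 : Module.End ℤ (Y →₀ ℤ)) = 1 := by
  simp only [tensorEnd, Module.End.one_eq_id, TensorProduct.map_id, LinearEquiv.conj_id]

theorem tensorEnd_add_left : tensorEnd (f + f') g = tensorEnd f g + tensorEnd f' g := by
  simp only [tensorEnd, TensorProduct.map_add_left, map_add]

theorem tensorEnd_add_right : tensorEnd f (g + g') = tensorEnd f g + tensorEnd f g' := by
  simp only [tensorEnd, TensorProduct.map_add_right, map_add]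

theorem tensorEnd_neg_left : tensorEnd (-f) g = -tensorEnd f g :=
  finsuppEnd_ext fun ⟨x, y⟩ ↦ by simp

theorem tensorEnd_neg_right : tensorEnd f (-g) = -tensorEnd f g :=
  finsuppEnd_ext fun ⟨x, y⟩ ↦ by simp

theorem tensorEnd_zero_left : tensorEnd (0 : Module.End ℤ (X →₀ ℤ)) g = 0 :=
  finsuppEnd_ext fun ⟨x, y⟩ ↦ by simp

theorem tensorEnd_zero_right : tensorEnd f (0 : Module.End ℤ (Y →₀ ℤ)) = 0 :=
  finsuppEnd_ext fun ⟨x, y⟩ ↦ by simp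

end

end FinsuppEnd

section Graded

variable {X Y : Type*} (deg : X → ℕ)

/-- The chains of degree `n`. -/
abbrev chainsOfDegree (n : ℕ) : Submodule ℤ (X →₀ ℤ) := supported ℤ ℤ {x | deg x = n}

/-- `f` shifts degrees by `k`. -/
def IsHomogeneous (k : ℤ) (f : Module.End ℤ (X →₀ ℤ)) : Prop :=
  ∀ x, f (single x 1) ∈ supported ℤ ℤ {y | (deg y : ℤ) = deg x + k}

/-- The sign operator `(-1) ^ deg`. -/
noncomputable def signEnd : Module.End ℤ (X →₀ ℤ) :=
  linearCombination ℤ fun x ↦ single x ((-1) ^ deg x)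

/-- The augmentation, sending each vertex (cell of degree zero) to `1`. -/
noncomputable def vertexSum : (X →₀ ℤ) →ₗ[ℤ] ℤ :=
  linearCombination ℤ fun x ↦ if deg x = 0 then 1 else 0

variable {deg} {deg' : Y → ℕ} {k l : ℤ} {f f' : Module.End ℤ (X →₀ ℤ)}
  {g : Module.End ℤ (Y →₀ ℤ)}

@[simp]
theorem signEnd_single (x : X) : signEnd deg (single x 1) = (-1) ^ deg x • single x (1 : ℤ) := by
  simp [signEnd]

@[simp]
theorem vertexSum_single (x : X) : vertexSum deg (single x 1) = if deg x = 0 then 1 else 0 := by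
  simp [vertexSum]

theorem signEnd_apply (v : X →₀ ℤ) (x : X) : signEnd deg v x = (-1) ^ deg x * v x := by
  induction v using Finsupp.induction_linear with
  | zero => simp
  | add u v hu hv => simp [hu, hv, mul_add]
  | single y a =>
    rcases eq_or_ne y x with rfl | hyx
    · simp [signEnd, mul_comm]
    · simp [signEnd, hyx]

theorem isHomogeneous_one : IsHomogeneous deg 0 1 := fun x ↦
  single_mem_supported ℤ 1 (by simp)

theorem isHomogeneous_signEnd : IsHomogeneous deg 0 (signEnd deg) := fun x ↦ by
  rw [signEnd_single]
  exact Submodule.smul_mem _ _ (single_mem_supported ℤ 1 (by simp))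

theorem IsHomogeneous.add (hf : IsHomogeneous deg k f) (hf' : IsHomogeneous deg k f') :
    IsHomogeneous deg k (f + f') := fun x ↦
  Submodule.add_mem _ (hf x) (hf' x)

theorem IsHomogeneous.apply_ne_zero (hf : IsHomogeneous deg k f) {x y : X}
    (h : f (single x 1) y ≠ 0) : (deg y : ℤ) = deg x + k :=
  (mem_supported _ _).1 (hf x) (mem_support_iff.2 h)

theorem IsHomogeneous.tensorEnd (hf : IsHomogeneous deg k f) (hg : IsHomogeneous deg' l g) :
    IsHomogeneous (fun p : X × Y ↦ deg p.1 + deg' p.2) (k + l) (tensorEnd f g) := by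
  rintro ⟨x, y⟩
  rw [mem_supported]
  rintro ⟨x', y'⟩ hne
  rw [Finset.mem_coe, mem_support_iff, tensorEnd_single, cross_apply_mk, mul_ne_zero_iff] at hne
  have hx := hf.apply_ne_zero hne.1
  have hy := hg.apply_ne_zero hne.2
  grind

theorem IsHomogeneous.mem_chainsOfDegree (hf : IsHomogeneous deg k f) {m n : ℕ}
    (hn : (n : ℤ) = m + k) {v : X →₀ ℤ} (hv : v ∈ chainsOfDegree deg m) :
    f v ∈ chainsOfDegree deg n := by
  rw [chainsOfDegree, supported_eq_span_single] at hv
  induction hv using Submodule.span_induction with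
  | zero => simp
  | add u v _ _ hu hv => exact map_add f u v ▸ Submodule.add_mem _ hu hv
  | smul a v _ hv => exact map_smul f a v ▸ Submodule.smul_mem _ a hv
  | mem v hv =>
    obtain ⟨x, rfl : deg x = m, rfl⟩ := hv
    refine supported_mono (fun y hy ↦ ?_) (hf x)
    grind

theorem IsHomogeneous.signEnd_mul (hf : IsHomogeneous deg k f) (hk : Odd k) :
    signEnd deg * f = -(f * signEnd deg) := by
  refine finsuppEnd_ext fun x ↦ Finsupp.ext fun y ↦ ?_
  by_cases hne : f (single x 1) y = 0
  · simp [-Finsupp.smul_single, signEnd_apply, hne]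
  · have parity : (-1 : ℤ) ^ deg y = -(-1) ^ deg x := by
      have hdeg := hf.apply_ne_zero hne
      rcases Nat.even_or_odd (deg x) with hx | hx
      · rw [hx.neg_one_pow, Odd.neg_one_pow (by grind)]
      · rw [hx.neg_one_pow, Even.neg_one_pow (by grind), neg_neg]
    simp [-Finsupp.smul_single, signEnd_apply, parity]

theorem vertexSum_eq_zero {n : ℕ} {v : X →₀ ℤ} (hv : v ∈ chainsOfDegree deg (n + 1)) :
    vertexSum deg v = 0 := by
  rw [vertexSum, linearCombination_apply]
  refine Finset.sum_eq_zero fun x hx ↦ ?_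
  have hdeg : deg x = n + 1 := (mem_supported _ _).1 hv hx
  simp [hdeg]

theorem vertexSum_cross (u : X →₀ ℤ) (v : Y →₀ ℤ) :
    vertexSum (fun p : X × Y ↦ deg p.1 + deg' p.2) (cross u v) =
      vertexSum deg u * vertexSum deg' v := by
  induction u using Finsupp.induction_linear with
  | zero => simp
  | add u u' hu hu' => simp [hu, hu', add_mul]
  | single x a =>
    induction v using Finsupp.induction_linear with
    | zero => simp
    | add v v' hv hv' => simp [hv, hv', mul_add]
    | single y b =>
      by_cases hx : deg x = 0 <;> simp [cross, -single_mul, vertexSum, hx]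

end Graded

/-- A nonnegatively graded chain complex of free abelian groups with basis `X`, contracted onto a
vertex: `s` is a homotopy between the identity and the projection to `base`. -/
structure ContractedComplex (X : Type*) where
  deg : X → ℕ
  base : X
  d : Module.End ℤ (X →₀ ℤ)
  s : Module.End ℤ (X →₀ ℤ)
  deg_base : deg base = 0
  isHomogeneous_d : IsHomogeneous deg (-1) d
  isHomogeneous_s : IsHomogeneous deg 1 s
  d_mul_d : d * d = 0
  vertexSum_d : vertexSum deg ∘ₗ d = 0
  d_mul_s_add_s_mul_d :
    d * s + s * d = 1 - LinearMap.toSpanSingleton ℤ _ (single base 1) ∘ₗ vertexSum deg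

namespace ContractedComplex

variable {X Y : Type*} (C : ContractedComplex X) (D : ContractedComplex Y)

/-- The projection of the chains onto the base vertex. -/
noncomputable def baseProjection : Module.End ℤ (X →₀ ℤ) :=
  LinearMap.toSpanSingleton ℤ _ (single C.base 1) ∘ₗ vertexSum C.deg

@[simp]
theorem baseProjection_single (x : X) :
    C.baseProjection (single x 1) = if C.deg x = 0 then single C.base 1 else 0 := by
  simp [baseProjection, ite_smul]

theorem eq_d_s {v : X →₀ ℤ} (hd : C.d v = 0) (hv : vertexSum C.deg v = 0) : C.d (C.s v) = v := by
  simpa [hd, hv] using LinearMap.congr_fun C.d_mul_s_add_s_mul_d v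

theorem d_single_of_deg_eq_zero {x : X} (hx : C.deg x = 0) : C.d (single x 1) = 0 := by
  ext y
  by_contra hne
  have := C.isHomogeneous_d.apply_ne_zero hne
  omega

theorem d_mul_baseProjection : C.d * C.baseProjection = 0 :=
  finsuppEnd_ext fun x ↦ by
    simp [apply_ite C.d, C.d_single_of_deg_eq_zero C.deg_base]

theorem baseProjection_mul_d : C.baseProjection * C.d = 0 := by
  rw [baseProjection, Module.End.mul_eq_comp, LinearMap.comp_assoc, C.vertexSum_d,
    LinearMap.comp_zero]

theorem signEnd_mul_baseProjection : signEnd C.deg * C.baseProjection = C.baseProjection :=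
  finsuppEnd_ext fun x ↦ by
    simp [apply_ite (signEnd C.deg), C.deg_base]

theorem baseProjection_mul_signEnd : C.baseProjection * signEnd C.deg = C.baseProjection :=
  finsuppEnd_ext fun x ↦ by
    by_cases hx : C.deg x = 0 <;> simp [-Finsupp.smul_single, hx]

theorem isHomogeneous_baseProjection : IsHomogeneous C.deg 0 C.baseProjection := fun x ↦ by
  rw [baseProjection_single]
  split_ifs with hx
  · exact single_mem_supported ℤ 1 (by simp [hx, C.deg_base])
  · exact Submodule.zero_mem _

theorem signEnd_mul_d : signEnd C.deg * C.d = -(C.d * signEnd C.deg) :=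
  C.isHomogeneous_d.signEnd_mul (by decide)

theorem signEnd_mul_s : signEnd C.deg * C.s = -(C.s * signEnd C.deg) :=
  C.isHomogeneous_s.signEnd_mul odd_one

/-- The differential of the tensor product, with the Koszul sign. -/
noncomputable def prodD : Module.End ℤ (X × Y →₀ ℤ) :=
  tensorEnd C.d 1 + tensorEnd (signEnd C.deg) D.d

/-- The contraction of the tensor product: first contract `X`, then contract `Y` over the base. -/
noncomputable def prodS : Module.End ℤ (X × Y →₀ ℤ) :=
  tensorEnd C.s 1 + tensorEnd C.baseProjection D.s

theorem prodD_mul_prodD : C.prodD D * C.prodD D = 0 := by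
  simp only [prodD, add_mul, mul_add, ← tensorEnd_mul, C.d_mul_d, D.d_mul_d, C.signEnd_mul_d,
    one_mul, mul_one, tensorEnd_neg_left, tensorEnd_zero_left, tensorEnd_zero_right]
  abel

theorem vertexSum_prodD :
    vertexSum (fun p : X × Y ↦ C.deg p.1 + D.deg p.2) ∘ₗ C.prodD D = 0 := by
  have hd : ∀ v, vertexSum C.deg (C.d v) = 0 := LinearMap.congr_fun C.vertexSum_d
  have hd' : ∀ v, vertexSum D.deg (D.d v) = 0 := LinearMap.congr_fun D.vertexSum_d
  refine Finsupp.lhom_ext' fun ⟨x, y⟩ ↦ LinearMap.ext_ring ?_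
  simp [prodD, vertexSum_cross, hd, hd']

theorem prodD_mul_prodS_add :
    C.prodD D * C.prodS D + C.prodS D * C.prodD D =
      1 - tensorEnd C.baseProjection D.baseProjection := by
  have homotopy : C.d * C.s = 1 - C.baseProjection - C.s * C.d :=
    eq_sub_of_add_eq C.d_mul_s_add_s_mul_d
  have homotopy' : D.d * D.s = 1 - D.baseProjection - D.s * D.d :=
    eq_sub_of_add_eq D.d_mul_s_add_s_mul_d
  simp only [prodD, prodS, add_mul, mul_add, ← tensorEnd_mul, one_mul, mul_one, homotopy,
    homotopy', C.d_mul_baseProjection, C.baseProjection_mul_d, C.signEnd_mul_baseProjection,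
    C.baseProjection_mul_signEnd, C.signEnd_mul_s, sub_eq_add_neg, tensorEnd_add_left,
    tensorEnd_add_right, tensorEnd_neg_left, tensorEnd_neg_right, tensorEnd_zero_left,
    tensorEnd_one]
  abel

/-- The tensor product of two contracted complexes. -/
noncomputable def prod : ContractedComplex (X × Y) where
  deg p := C.deg p.1 + D.deg p.2
  base := (C.base, D.base)
  d := C.prodD D
  s := C.prodS D
  deg_base := by rw [C.deg_base, D.deg_base]
  isHomogeneous_d := by
    simpa [prodD] using (C.isHomogeneous_d.tensorEnd (isHomogeneous_one (deg := D.deg))).add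
      ((isHomogeneous_signEnd (deg := C.deg)).tensorEnd D.isHomogeneous_d)
  isHomogeneous_s := by
    simpa [prodS] using (C.isHomogeneous_s.tensorEnd (isHomogeneous_one (deg := D.deg))).add
      (C.isHomogeneous_baseProjection.tensorEnd D.isHomogeneous_s)
  d_mul_d := C.prodD_mul_prodD D
  vertexSum_d := C.vertexSum_prodD D
  d_mul_s_add_s_mul_d := by
    rw [prodD_mul_prodS_add]
    congr 1
    refine finsuppEnd_ext fun ⟨x, y⟩ ↦ ?_
    simp only [tensorEnd_single, baseProjection_single, LinearMap.comp_apply, vertexSum_single,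
      LinearMap.toSpanSingleton_apply, Nat.add_eq_zero_iff]
    split_ifs <;> simp_all

end ContractedComplex

namespace Line

/-- The dimension of a cell of the line `ℝ`, subdivided with a vertex at each even integer. The edge
from `2n` to `2n + 2` is labelled by its midpoint `2n + 1`. -/
def deg (c : ℤ) : ℕ := (c % 2).toNat

/-- The boundary operator of the line. -/
noncomputable def d : Module.End ℤ (ℤ →₀ ℤ) :=
  linearCombination ℤ fun c ↦ if Even c then 0 else single (c + 1) 1 - single (c - 1) 1

/-- The 1-chain from `0` to `2n`. -/
noncomputable def path (n : ℤ) : ℤ →₀ ℤ :=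
  ∑ j ∈ Finset.Ico 0 n, single (2 * j + 1) 1 - ∑ j ∈ Finset.Ico n 0, single (2 * j + 1) 1

/-- The contraction of the line to `0`. -/
noncomputable def s : Module.End ℤ (ℤ →₀ ℤ) :=
  linearCombination ℤ fun c ↦ if Even c then path (c / 2) else 0

@[simp]
theorem deg_even (n : ℤ) : deg (2 * n) = 0 := by simp [deg]

@[simp]
theorem deg_odd (n : ℤ) : deg (2 * n + 1) = 1 := by simp [deg, Int.add_emod]

@[simp]
theorem d_even (n : ℤ) : d (single (2 * n) 1) = 0 := by simp [d]

@[simp]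
theorem d_odd (n : ℤ) :
    d (single (2 * n + 1) 1) = single (2 * (n + 1)) 1 - single (2 * n) 1 := by
  simp [d, mul_add, add_assoc]

@[simp]
theorem s_even (n : ℤ) : s (single (2 * n) 1) = path n := by simp [s]

@[simp]
theorem s_odd (n : ℤ) : s (single (2 * n + 1) 1) = 0 := by simp [s]

theorem path_zero : path 0 = 0 := by simp [path]

theorem path_succ (n : ℤ) : path (n + 1) = path n + single (2 * n + 1) 1 := by
  rcases le_or_gt 0 n with hn | hn
  · simp only [path, ← Finset.insert_Ico_right_eq_Ico_add_one hn,
      Finset.sum_insert Finset.right_notMem_Ico, Finset.Ico_eq_empty_of_le hn,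
      Finset.Ico_eq_empty_of_le (Int.le_add_one hn), Finset.sum_empty]
    abel
  · simp only [path, ← Finset.insert_Ico_add_one_left_eq_Ico hn,
      Finset.sum_insert (show n ∉ Finset.Ico (n + 1) 0 by simp),
      Finset.Ico_eq_empty_of_le hn.le,
      Finset.Ico_eq_empty_of_le (Int.add_one_le_of_lt hn), Finset.sum_empty]
    abel

theorem d_path (n : ℤ) : d (path n) = single (2 * n) 1 - single 0 1 := by
  induction n using Int.induction_on with
  | zero => simp [path_zero]
  | succ n ih => rw [path_succ, map_add, ih, d_odd]; abel
  | pred n ih =>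
    have step := path_succ (-n - 1)
    rw [sub_add_cancel] at step
    rw [step, map_add, d_odd, sub_add_cancel] at ih
    rw [← add_right_cancel_iff, ih]
    abel

theorem path_mem_supported (n : ℤ) : path n ∈ supported ℤ ℤ {c | deg c = 1} :=
  Submodule.sub_mem _ (Submodule.sum_mem _ fun j _ ↦ single_mem_supported ℤ 1 (deg_odd j))
    (Submodule.sum_mem _ fun j _ ↦ single_mem_supported ℤ 1 (deg_odd j))

end Line

open Line in
/-- The line with vertices at the even integers, contracted to `0`. -/
noncomputable def line : ContractedComplex ℤ where
  deg := deg
  base := 0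
  d := d
  s := s
  deg_base := deg_even 0
  isHomogeneous_d c := by
    obtain ⟨n, rfl | rfl⟩ := Int.even_or_odd' c
    · simp
    · rw [d_odd]
      exact Submodule.sub_mem _ (single_mem_supported ℤ 1 (by simp))
        (single_mem_supported ℤ 1 (by simp))
  isHomogeneous_s c := by
    obtain ⟨n, rfl | rfl⟩ := Int.even_or_odd' c
    · simpa using path_mem_supported n
    · simp
  d_mul_d := finsuppEnd_ext fun c ↦ by
    obtain ⟨n, rfl | rfl⟩ := Int.even_or_odd' c <;> simp
  vertexSum_d := Finsupp.lhom_ext' fun c ↦ LinearMap.ext_ring <| by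
    obtain ⟨n, rfl | rfl⟩ := Int.even_or_odd' c <;> simp
  d_mul_s_add_s_mul_d := finsuppEnd_ext fun c ↦ by
    obtain ⟨n, rfl | rfl⟩ := Int.even_or_odd' c <;> simp [d_path, path_succ]

namespace PeriodicResolution

section

variable (m : ℕ)

/-- The contraction of the periodic resolution. -/
noncomputable def s : Module.End ℤ (ZMod m × ℕ →₀ ℤ) :=
  linearCombination ℤ fun c ↦
    if Even c.2 then ∑ j ∈ Finset.range c.1.val, single ((j : ZMod m), c.2 + 1) 1
    else if c.1 + 1 = 0 then single (0, c.2 + 1) 1 else 0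

variable {m}

theorem s_of_even (h : ZMod m) {q : ℕ} (hq : Even q) :
    s m (single (h, q) 1) = ∑ j ∈ Finset.range h.val, single ((j : ZMod m), q + 1) 1 := by
  simp [s, hq]

theorem s_of_odd (h : ZMod m) {q : ℕ} (hq : ¬Even q) :
    s m (single (h, q) 1) = if h + 1 = 0 then single (0, q + 1) 1 else 0 := by
  simp [s, hq]

end

variable (m : ℕ) [NeZero m]

/-- The differential of the periodic resolution of `ℤ/m`: on the cell `(h, q)`, the group element
`h` in degree `q`, it is alternately multiplication by `t - 1` and by the norm element. -/
noncomputable def d : Module.End ℤ (ZMod m × ℕ →₀ ℤ) :=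
  linearCombination ℤ fun
    | (_, 0) => 0
    | (h, q + 1) => if Even q then single (h + 1, q) 1 - single (h, q) 1
        else ∑ g : ZMod m, single (g, q) 1

variable {m}

theorem d_zero (h : ZMod m) : d m (single (h, 0) 1) = 0 := by simp [d]

theorem d_succ_of_even (h : ZMod m) {q : ℕ} (hq : Even q) :
    d m (single (h, q + 1) 1) = single (h + 1, q) 1 - single (h, q) 1 := by simp [d, hq]

theorem d_succ_of_odd (h : ZMod m) {q : ℕ} (hq : ¬Even q) :
    d m (single (h, q + 1) 1) = ∑ g : ZMod m, single (g, q) 1 := by simp [d, hq]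

theorem d_s_of_even (h : ZMod m) {q : ℕ} (hq : Even q) :
    d m (s m (single (h, q) 1)) = single (h, q) 1 - single (0, q) 1 := by
  have telescope := Finset.sum_range_sub (fun j : ℕ ↦ single ((j : ZMod m), q) (1 : ℤ)) h.val
  simpa [s_of_even _ hq, d_succ_of_even _ hq] using telescope

theorem add_one_eq_zero_iff_val {h : ZMod m} : h + 1 = 0 ↔ h.val + 1 = m := by
  have cast_val : ((h.val + 1 : ℕ) : ZMod m) = h + 1 := by simp
  rw [← cast_val, ZMod.natCast_eq_zero_iff]
  exact ⟨fun hdvd ↦ le_antisymm h.val_lt (Nat.le_of_dvd h.val.succ_pos hdvd),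
    fun heq ↦ dvd_of_eq heq.symm⟩

theorem val_add_one {h : ZMod m} (hh : h + 1 ≠ 0) : (h + 1).val = h.val + 1 := by
  have lt : h.val + 1 < m := lt_of_le_of_ne h.val_lt (mt add_one_eq_zero_iff_val.2 hh)
  rw [← ZMod.val_cast_of_lt lt]
  simp

theorem sum_univ_eq_sum_range_val {h : ZMod m} (hh : h + 1 = 0) (f : ZMod m → ZMod m × ℕ →₀ ℤ) :
    ∑ g, f g = ∑ j ∈ Finset.range h.val, f j + f h := by
  have reindex : ∑ g, f g = ∑ j ∈ Finset.range m, f j :=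
    Finset.sum_nbij' ZMod.val Nat.cast (by simp [ZMod.val_lt]) (by simp) (by simp)
      (fun j hj ↦ ZMod.val_cast_of_lt (Finset.mem_range.1 hj)) (by simp)
  have range_eq : Finset.range m = Finset.range (h.val + 1) := by
    rw [add_one_eq_zero_iff_val.1 hh]
  rw [reindex, range_eq, Finset.sum_range_succ]
  simp

theorem d_s_add_s_d_succ_of_even (h : ZMod m) {q : ℕ} (hq : Even q) :
    d m (s m (single (h, q + 1) 1)) + s m (d m (single (h, q + 1) 1)) = single (h, q + 1) 1 := by
  have hq' : ¬Even (q + 1) := by simpa [Nat.even_add_one] using hq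
  rw [d_succ_of_even h hq, map_sub, s_of_even _ hq, s_of_even _ hq, s_of_odd _ hq']
  split_ifs with hh
  · rw [d_succ_of_odd _ hq', sum_univ_eq_sum_range_val hh, hh]
    simp
  · rw [val_add_one hh, Finset.sum_range_succ]
    simp

theorem s_sum_univ {q : ℕ} (hq : ¬Even q) :
    s m (∑ g : ZMod m, single (g, q) 1) = single (0, q + 1) 1 := by
  simp [s_of_odd _ hq, add_eq_zero_iff_eq_neg]

end PeriodicResolution

open PeriodicResolution in
/-- The periodic resolution of `ℤ/m`, contracted to the vertex `(0, 0)`. -/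
noncomputable def periodicResolution (m : ℕ) [NeZero m] : ContractedComplex (ZMod m × ℕ) where
  deg := Prod.snd
  base := (0, 0)
  d := d m
  s := s m
  deg_base := rfl
  isHomogeneous_d := by
    rintro ⟨h, _ | q⟩
    · simp [d_zero]
    · by_cases hq : Even q
      · rw [d_succ_of_even h hq]
        exact Submodule.sub_mem _ (single_mem_supported ℤ 1 (by simp))
          (single_mem_supported ℤ 1 (by simp))
      · rw [d_succ_of_odd h hq]
        exact Submodule.sum_mem _ fun g _ ↦ single_mem_supported ℤ 1 (by simp)
  isHomogeneous_s := by
    rintro ⟨h, q⟩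
    by_cases hq : Even q
    · rw [s_of_even h hq]
      exact Submodule.sum_mem _ fun g _ ↦ single_mem_supported ℤ 1 (by simp)
    · rw [s_of_odd h hq]
      split_ifs
      · exact single_mem_supported ℤ 1 (by simp)
      · exact Submodule.zero_mem _
  d_mul_d := finsuppEnd_ext <| by
    rintro ⟨h, _ | _ | q⟩
    · simp [d_zero]
    · simp [d_succ_of_even, d_zero]
    · by_cases hq : Even q
      · have hq' : ¬Even (q + 1) := by simpa [Nat.even_add_one] using hq
        have shift := Equiv.sum_comp (Equiv.addRight (1 : ZMod m)) fun g ↦ single (g, q) (1 : ℤ)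
        simpa [d_succ_of_odd _ hq', d_succ_of_even _ hq, sub_eq_zero] using shift
      · have hq' : Even (q + 1) := by simpa [Nat.even_add_one] using hq
        simp [d_succ_of_even _ hq', d_succ_of_odd _ hq]
  vertexSum_d := Finsupp.lhom_ext' fun c ↦ LinearMap.ext_ring <| by
    obtain ⟨h, _ | _ | q⟩ := c
    · simp [d_zero]
    · simp [d_succ_of_even]
    · by_cases hq : Even (q + 1)
      · simp [d_succ_of_even _ hq]
      · simp [d_succ_of_odd _ hq]
  d_mul_s_add_s_mul_d := finsuppEnd_ext <| by
    rintro ⟨h, _ | q⟩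
    · simp [d_s_of_even, d_zero]
    · by_cases hq : Even q
      · simpa using d_s_add_s_d_succ_of_even h hq
      · have hq' : Even (q + 1) := by simpa [Nat.even_add_one] using hq
        simp [d_s_of_even _ hq', d_succ_of_odd _ hq, s_sum_univ hq, -map_sum]

/-! ### Free actions by signed permutations -/

/-- A permutation of `X` together with a sign attached to every point: an isometry of the free
abelian group on `X`, sending `x` to `sign x • perm x`. -/
@[ext]
structure SignedPerm (X : Type*) where
  perm : Equiv.Perm X
  sign : X → ℤˣ

namespace SignedPerm

variable {X Y : Type*}

instance : Mul (SignedPerm X) := ⟨fun s t ↦ ⟨s.perm * t.perm, fun x ↦ s.sign (t.perm x) * t.sign x⟩⟩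

instance : One (SignedPerm X) := ⟨⟨1, 1⟩⟩

instance : Inv (SignedPerm X) := ⟨fun s ↦ ⟨s.perm⁻¹, fun x ↦ s.sign (s.perm⁻¹ x)⟩⟩

@[simp] theorem mul_perm (s t : SignedPerm X) : (s * t).perm = s.perm * t.perm := rfl

@[simp] theorem mul_sign (s t : SignedPerm X) (x : X) :
    (s * t).sign x = s.sign (t.perm x) * t.sign x := rfl

@[simp] theorem one_perm : (1 : SignedPerm X).perm = 1 := rfl

@[simp] theorem one_sign (x : X) : (1 : SignedPerm X).sign x = 1 := rfl

instance : Group (SignedPerm X) :=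
  Group.ofLeftAxioms (fun _ _ _ ↦ SignedPerm.ext (mul_assoc _ _ _) (funext fun _ ↦ mul_assoc _ _ _))
    (fun _ ↦ SignedPerm.ext (one_mul _) (funext fun _ ↦ one_mul _))
    (fun s ↦ SignedPerm.ext (inv_mul_cancel s.perm) <| funext fun x ↦ by
      change s.sign (s.perm⁻¹ (s.perm x)) * s.sign x = 1
      rw [Equiv.Perm.inv_def, Equiv.symm_apply_apply, Int.units_mul_self])

/-- The underlying permutation, as a homomorphism. -/
def permHom : SignedPerm X →* Equiv.Perm X where
  toFun := perm
  map_one' := rfl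
  map_mul' _ _ := rfl

variable (X) in
/-- The action of signed permutations on chains. -/
noncomputable def toEnd : SignedPerm X →* Module.End ℤ (X →₀ ℤ) where
  toFun s := linearCombination ℤ fun x ↦ (s.sign x : ℤ) • single (s.perm x) 1
  map_one' := finsuppEnd_ext fun x ↦ by simp
  map_mul' s t := finsuppEnd_ext fun x ↦ by
    simp [-Finsupp.smul_single, smul_smul, mul_comm]

@[simp]
theorem toEnd_single (s : SignedPerm X) (x : X) :
    toEnd X s (single x 1) = (s.sign x : ℤ) • single (s.perm x) (1 : ℤ) := by
  simp [toEnd]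

/-- Signed permutations of the factors act on the product. -/
def prod (s : SignedPerm X) (t : SignedPerm Y) : SignedPerm (X × Y) where
  perm := s.perm.prodCongr t.perm
  sign p := s.sign p.1 * t.sign p.2

@[simp] theorem prod_perm_apply (s : SignedPerm X) (t : SignedPerm Y) (p : X × Y) :
    (s.prod t).perm p = (s.perm p.1, t.perm p.2) := rfl

@[simp] theorem prod_sign (s : SignedPerm X) (t : SignedPerm Y) (p : X × Y) :
    (s.prod t).sign p = s.sign p.1 * t.sign p.2 := rfl

theorem prod_mul_prod (s s' : SignedPerm X) (t t' : SignedPerm Y) :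
    s.prod t * s'.prod t' = (s * s').prod (t * t') :=
  SignedPerm.ext rfl (funext fun _ ↦ mul_mul_mul_comm _ _ _ _)

theorem prod_one_one : (1 : SignedPerm X).prod (1 : SignedPerm Y) = 1 :=
  SignedPerm.ext rfl (funext fun _ ↦ mul_one _)

theorem prod_pow (s : SignedPerm X) (t : SignedPerm Y) (k : ℕ) :
    s.prod t ^ k = (s ^ k).prod (t ^ k) := by
  induction k with
  | zero => simp only [pow_zero, prod_one_one]
  | succ k ih => simp only [pow_succ, ih, prod_mul_prod]

theorem toEnd_prod (s : SignedPerm X) (t : SignedPerm Y) :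
    toEnd (X × Y) (s.prod t) = tensorEnd (toEnd X s) (toEnd Y t) :=
  finsuppEnd_ext fun ⟨x, y⟩ ↦ by simp [-Finsupp.smul_single, smul_smul, mul_comm]

end SignedPerm

namespace ContractedComplex

variable {X Y : Type*} (C : ContractedComplex X) (D : ContractedComplex Y)

/-- The signed permutations of the cells that are chain maps over the augmentation. -/
def automorphisms : Submonoid (SignedPerm X) where
  carrier := {s | (∀ x, C.deg (s.perm x) = C.deg x) ∧ (∀ x, C.deg x = 0 → s.sign x = 1) ∧
    Commute (SignedPerm.toEnd X s) C.d}
  one_mem' := ⟨fun _ ↦ rfl, fun _ _ ↦ rfl, by simp [Commute.one_left]⟩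
  mul_mem' {s t} hs ht :=
    ⟨fun x ↦ (hs.1 _).trans (ht.1 x),
      fun x hx ↦ by simp [hs.2.1 (t.perm x) ((ht.1 x).trans hx), ht.2.1 x hx],
      by simpa using hs.2.2.mul_left ht.2.2⟩

theorem d_eq_zero_of_mem {v : X →₀ ℤ} (hv : v ∈ chainsOfDegree C.deg 0) : C.d v = 0 := by
  rw [chainsOfDegree, supported_eq_span_single] at hv
  have span_le : Submodule.span ℤ ((fun x ↦ single x (1 : ℤ)) '' {x | C.deg x = 0}) ≤
      LinearMap.ker C.d :=
    Submodule.span_le.2 (by rintro _ ⟨x, hx, rfl⟩; exact C.d_single_of_deg_eq_zero hx)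
  exact span_le hv

variable {C D} {s : SignedPerm X} {t : SignedPerm Y}

theorem isHomogeneous_toEnd (hs : s ∈ C.automorphisms) :
    IsHomogeneous C.deg 0 (SignedPerm.toEnd X s) := fun x ↦ by
  rw [SignedPerm.toEnd_single]
  exact Submodule.smul_mem _ _ (single_mem_supported ℤ 1 (by simp [hs.1 x]))

theorem vertexSum_toEnd (hs : s ∈ C.automorphisms) (v : X →₀ ℤ) :
    vertexSum C.deg (SignedPerm.toEnd X s v) = vertexSum C.deg v := by
  suffices vertexSum C.deg ∘ₗ SignedPerm.toEnd X s = vertexSum C.deg from LinearMap.congr_fun this v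
  refine Finsupp.lhom_ext' fun x ↦ LinearMap.ext_ring ?_
  by_cases hx : C.deg x = 0
  · simp [hs.1 x, hx, hs.2.1 x hx]
  · simp [-Finsupp.smul_single, hs.1 x, hx]

theorem commute_toEnd_signEnd (hs : s ∈ C.automorphisms) :
    Commute (SignedPerm.toEnd X s) (signEnd C.deg) :=
  finsuppEnd_ext fun x ↦ by simp [-Finsupp.smul_single, smul_smul, hs.1 x, mul_comm]

theorem prod_mem_automorphisms (hs : s ∈ C.automorphisms) (ht : t ∈ D.automorphisms) :
    s.prod t ∈ (C.prod D).automorphisms := by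
  refine ⟨fun p ↦ ?_, fun p hp ↦ ?_, ?_⟩
  · simp [ContractedComplex.prod, hs.1, ht.1]
  · obtain ⟨hx, hy⟩ := Nat.add_eq_zero_iff.1 hp
    simp [hs.2.1 p.1 hx, ht.2.1 p.2 hy]
  · rw [SignedPerm.toEnd_prod]
    change _ * C.prodD D = C.prodD D * _
    simp only [prodD, mul_add, add_mul, ← tensorEnd_mul, hs.2.2.eq, ht.2.2.eq,
      (commute_toEnd_signEnd hs).eq, one_mul, mul_one]

/-- A group acting on a contracted complex by signed permutations of the cells, freely on the cells,
with orbit representatives `cell i`. -/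
structure FreeAction (C : ContractedComplex X) (Γ : Type*) [Group Γ] (I : Type*) where
  action : Γ →* SignedPerm X
  action_mem (g : Γ) : action g ∈ C.automorphisms
  cell : I → X
  bijective : Function.Bijective fun p : Γ × I ↦ (action p.1).perm (cell p.2)

namespace FreeAction

variable {Γ : Type*} [Group Γ] {I : Type*} (A : C.FreeAction Γ I)

/-- The representation of `Γ` on the chains of degree `n`. -/
noncomputable def ρ (n : ℕ) : Representation ℤ Γ (chainsOfDegree C.deg n) where
  toFun g := (SignedPerm.toEnd X (A.action g)).restrict fun _ hv ↦
    (isHomogeneous_toEnd (A.action_mem g)).mem_chainsOfDegree (by simp) hv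
  map_one' := by ext; simp
  map_mul' g h := by ext; simp

theorem deg_cell (g : Γ) (i : I) : C.deg ((A.action g).perm (A.cell i)) = C.deg (A.cell i) :=
  (A.action_mem g).1 _

/-- Cells of degree `n` correspond to group elements and orbits of degree `n`. -/
noncomputable def cellEquiv (n : ℕ) :
    Γ × {i // C.deg (A.cell i) = n} ≃ {x | C.deg x = n} :=
  Equiv.ofBijective (fun p ↦ ⟨(A.action p.1).perm (A.cell p.2), (A.deg_cell _ _).trans p.2.2⟩) <| by
    constructor
    · rintro ⟨g, i, hi⟩ ⟨g', i', hi'⟩ heq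
      have orbit_eq : (g, i) = (g', i') := A.bijective.1 (congrArg Subtype.val heq)
      simpa using orbit_eq
    · rintro ⟨x, hx⟩
      obtain ⟨⟨g, i⟩, rfl⟩ := A.bijective.2 x
      exact ⟨⟨g, i, (A.deg_cell g i).symm.trans hx⟩, rfl⟩

/-- The basis of translates `g • cell i`, carrying the sign of the action. -/
noncomputable def basis (n : ℕ) :
    Module.Basis (Γ × {i // C.deg (A.cell i) = n}) ℤ (chainsOfDegree C.deg n) :=
  ((Module.Basis.ofRepr (supportedEquivFinsupp {x | C.deg x = n})).reindex
    (A.cellEquiv n).symm).unitsSMul fun p ↦ (A.action p.1).sign (A.cell p.2)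

theorem coe_basis (n : ℕ) (p : Γ × {i // C.deg (A.cell i) = n}) :
    (A.basis n p : X →₀ ℤ) = SignedPerm.toEnd X (A.action p.1) (single (A.cell p.2) 1) := by
  have single_cell := supportedEquivFinsupp_symm_single (M := ℤ) (R := ℤ) _ (A.cellEquiv n p) 1
  rw [SignedPerm.toEnd_single, basis, Module.Basis.unitsSMul_apply, Module.Basis.reindex_apply]
  exact congrArg (((A.action p.1).sign (A.cell p.2) : ℤ) • ·) single_cell

/-- The free resolution of `ℤ` provided by a free action on a contracted complex. -/
noncomputable def freeResolution {X Γ I : Type} [Group Γ] {C : ContractedComplex X}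
    (A : C.FreeAction Γ I) : FreeResolution ℤ Γ where
  V n := chainsOfDegree C.deg n
  ρ := A.ρ
  d n := C.d.restrict fun _ hv ↦ C.isHomogeneous_d.mem_chainsOfDegree (by simp) hv
  d_equivariant n g x := Subtype.ext (LinearMap.congr_fun (A.action_mem g).2.2.eq x.1).symm
  ε := (vertexSum C.deg).domRestrict _
  ε_invariant g x := vertexSum_toEnd (A.action_mem g) x.1
  ε_surjective a :=
    ⟨a • ⟨single C.base 1, single_mem_supported ℤ 1 C.deg_base⟩,
      by simp [-Finsupp.smul_single, C.deg_base]⟩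
  ε_d x := LinearMap.congr_fun C.vertexSum_d x.1
  d_d n x := Subtype.ext (LinearMap.congr_fun C.d_mul_d x.1)
  exact_zero x hx := ⟨⟨C.s x.1, C.isHomogeneous_s.mem_chainsOfDegree (by simp) x.2⟩,
    Subtype.ext (C.eq_d_s (C.d_eq_zero_of_mem x.2) hx)⟩
  exact_succ n x hx := ⟨⟨C.s x.1, C.isHomogeneous_s.mem_chainsOfDegree (by simp) x.2⟩,
    Subtype.ext (C.eq_d_s (Subtype.ext_iff.1 hx) (vertexSum_eq_zero x.2))⟩
  I n := {i // C.deg (A.cell i) = n}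
  basis := A.basis
  ρ_basis n g h i := Subtype.ext <| by
    rw [coe_basis, map_mul, map_mul, Module.End.mul_apply]
    exact congrArg (SignedPerm.toEnd X (A.action g)) (A.coe_basis n (h, i))

end FreeAction

end ContractedComplex

namespace Line

/-- Translation of the line by `2l`. -/
def translation (l : ℤ) : SignedPerm ℤ := ⟨Equiv.addRight (2 * l), 1⟩

/-- The reflection of the line in `0`, which reverses the edges. -/
def reflection : SignedPerm ℤ := ⟨Equiv.neg ℤ, fun c ↦ (-1) ^ deg c⟩

/-- The quarter turn `(x, y) ↦ (-y, x)` of the plane, which sends the vertical edges to reversed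
horizontal ones. -/
def rotation : SignedPerm (ℤ × ℤ) where
  perm := (Equiv.prodComm ℤ ℤ).trans ((Equiv.neg ℤ).prodCongr (Equiv.refl ℤ))
  sign p := if Even p.1 ∧ ¬Even p.2 then -1 else 1

@[simp]
theorem translation_perm (l c : ℤ) : (translation l).perm c = c + 2 * l := rfl

@[simp]
theorem translation_sign (l c : ℤ) : (translation l).sign c = 1 := rfl

@[simp]
theorem reflection_perm (c : ℤ) : reflection.perm c = -c := rfl

@[simp]
theorem reflection_sign (c : ℤ) : reflection.sign c = (-1) ^ deg c := rfl

@[simp]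
theorem rotation_perm (p : ℤ × ℤ) : rotation.perm p = (-p.2, p.1) := rfl

@[simp]
theorem rotation_sign (p : ℤ × ℤ) :
    rotation.sign p = if Even p.1 ∧ ¬Even p.2 then -1 else 1 := rfl

theorem deg_add_two_mul (c l : ℤ) : deg (c + 2 * l) = deg c := by simp [deg]

theorem deg_neg (c : ℤ) : deg (-c) = deg c := by simp [deg, Int.neg_emod_two]

theorem d_odd_neg (n : ℤ) :
    d (single (-(2 * n + 1)) 1) = single (-(2 * n)) 1 - single (-(2 * (n + 1))) 1 := by
  rw [show -(2 * n + 1) = 2 * (-n - 1) + 1 by ring, d_odd]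
  congr 2 <;> ring_nf

theorem d_even_neg (n : ℤ) : d (single (-(2 * n)) 1) = 0 := by
  rw [← mul_neg, d_even]

theorem translation_mem (l : ℤ) : translation l ∈ line.automorphisms := by
  refine ⟨fun c ↦ deg_add_two_mul c l, fun _ _ ↦ rfl, finsuppEnd_ext fun c ↦ ?_⟩
  change _ = d _
  obtain ⟨n, rfl | rfl⟩ := Int.even_or_odd' c
  · have := d_even (n + l)
    simp_all [line, mul_add]
  · have := d_odd (n + l)
    simp_all [line, mul_add, add_right_comm]

theorem reflection_mem : reflection ∈ line.automorphisms := by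
  refine ⟨fun c ↦ deg_neg c, fun c hc ↦ congrArg ((-1 : ℤˣ) ^ ·) hc,
    finsuppEnd_ext fun c ↦ ?_⟩
  obtain ⟨n, rfl | rfl⟩ := Int.even_or_odd' c
  · simp [line, d_even_neg]
  · simp [-neg_add_rev, line, d_odd_neg]

theorem reflection_sq : reflection ^ 2 = 1 :=
  SignedPerm.ext (Equiv.ext fun c ↦ by simp [pow_two])
    (funext fun c ↦ by simp [pow_two, deg_neg, Int.units_mul_self])

theorem rotation_pow_four : rotation ^ 4 = 1 := by
  refine SignedPerm.ext (Equiv.ext fun p ↦ by simp [pow_succ]) (funext fun p ↦ ?_)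
  by_cases hx : Even p.1 <;> by_cases hy : Even p.2 <;>
    simp [-Int.not_even_iff_odd, pow_succ, hx, hy]

theorem rotation_mem : rotation ∈ (line.prod line).automorphisms := by
  refine ⟨fun p ↦ ?_, fun p hp ↦ ?_, finsuppEnd_ext fun ⟨x, y⟩ ↦ ?_⟩
  · simp [ContractedComplex.prod, line, deg_neg, add_comm]
  · simp [ContractedComplex.prod, line, deg] at hp
    simp only [rotation_sign]
    grind
  · obtain ⟨m, rfl | rfl⟩ := Int.even_or_odd' x <;> obtain ⟨n, rfl | rfl⟩ := Int.even_or_odd' y <;>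
    simp [-neg_add_rev, -Finsupp.smul_single, ContractedComplex.prod,
      ContractedComplex.prodD, line, d_even_neg, d_odd_neg, deg_neg, ← Int.not_even_iff_odd]
    abel

end Line

/-- The generator of `ℤ/m` acting on its periodic resolution. -/
def PeriodicResolution.shift (m : ℕ) : SignedPerm (ZMod m × ℕ) :=
  ⟨(Equiv.addRight 1).prodCongr (Equiv.refl ℕ), 1⟩

namespace PeriodicResolution

variable {m : ℕ}

@[simp]
theorem shift_perm (c : ZMod m × ℕ) : (shift m).perm c = (c.1 + 1, c.2) := rfl

@[simp]
theorem shift_sign (c : ZMod m × ℕ) : (shift m).sign c = 1 := rfl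

theorem shift_pow (k : ℕ) :
    shift m ^ k = ⟨(Equiv.addRight (k : ZMod m)).prodCongr (.refl ℕ), 1⟩ := by
  induction k with
  | zero => exact SignedPerm.ext (Equiv.ext fun c ↦ by simp) rfl
  | succ k ih =>
    rw [pow_succ, ih]
    exact SignedPerm.ext (Equiv.ext fun ⟨h, q⟩ ↦ by simp [add_right_comm, add_assoc])
      (funext fun c ↦ by simp)

theorem shift_pow_self : shift m ^ m = 1 := by
  rw [shift_pow]
  exact SignedPerm.ext (Equiv.ext fun c ↦ by simp) rfl

theorem shift_mem [NeZero m] : shift m ∈ (periodicResolution m).automorphisms := by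
  refine ⟨fun _ ↦ rfl, fun _ _ ↦ rfl, finsuppEnd_ext ?_⟩
  rintro ⟨h, _ | q⟩
  · simp [periodicResolution, d_zero]
  · by_cases hq : Even q
    · simp [periodicResolution, d_succ_of_even _ hq]
    · have reindex := Equiv.sum_comp (Equiv.addRight (1 : ZMod m)) fun g ↦ single (g, q) (1 : ℤ)
      simpa [periodicResolution, d_succ_of_odd _ hq] using reindex

end PeriodicResolution

section Crys

open Crystal SemidirectProduct

variable {n q : ℕ} [NeZero q] {M : Matrix (Fin n) (Fin n) ℤ} {hq : M ^ q = 1}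

theorem matAction_apply (g : Multiplicative (ZMod q)) (l : Fin n → ℤ) :
    matAction q M hq g (.ofAdd l) = .ofAdd (M ^ g.toAdd.val *ᵥ l) := by
  change (glToAut n _ ^ g.toAdd.val) (.ofAdd l) = _
  induction g.toAdd.val with
  | zero => simp
  | succ k ih =>
    rw [pow_succ', MulAut.mul_apply, ih, pow_succ', ← Matrix.mulVec_mulVec]
    rfl

theorem pow_mul_map_lattice {G : Type*} [Group G] {T : Lat n →* G} {R : G}
    (hRT : ∀ l : Fin n → ℤ, R * T (.ofAdd l) = T (.ofAdd (M *ᵥ l)) * R) (k : ℕ) (l : Fin n → ℤ) :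
    R ^ k * T (.ofAdd l) = T (.ofAdd (M ^ k *ᵥ l)) * R ^ k := by
  induction k with
  | zero => simp
  | succ k ih =>
    rw [pow_succ', mul_assoc, ih, ← mul_assoc, hRT, mul_assoc, Matrix.mulVec_mulVec, ← pow_succ']

/-- The homomorphism from `ℤⁿ ⋊ ℤ/q` that is `T` on the lattice and sends the generator of `ℤ/q`
to `R`. -/
def crysLift {G : Type*} [Group G] (T : Lat n →* G) (R : G) (hR : R ^ q = 1)
    (hRT : ∀ l : Fin n → ℤ, R * T (.ofAdd l) = T (.ofAdd (M *ᵥ l)) * R) : Crys q M hq →* G :=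
  SemidirectProduct.lift T (zmodHom q R hR) fun g ↦ MonoidHom.ext fun l ↦ by
    change T (matAction q M hq g (.ofAdd l.toAdd)) =
      R ^ g.toAdd.val * T (.ofAdd l.toAdd) * (R ^ g.toAdd.val)⁻¹
    rw [matAction_apply, pow_mul_map_lattice hRT, mul_inv_cancel_right]

theorem bijective_smul_of_fiber {N G X I : Type*} [Group N] [Group G] {φ : G →* MulAut N}
    (act : N ⋊[φ] G →* Equiv.Perm X) (cell : I → X) (π : X → G)
    (π_act : ∀ g x, π (act g x) = g.right * π x) (π_cell : ∀ i, π (cell i) = 1)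
    (fiber : ∀ x, π x = 1 → ∃! p : N × I, act (inl p.1) (cell p.2) = x) :
    Function.Bijective fun p : (N ⋊[φ] G) × I ↦ act p.1 (cell p.2) := by
  constructor
  · rintro ⟨g, i⟩ ⟨g', i'⟩ (heq : act g (cell i) = act g' (cell i'))
    have right_eq : g.right = g'.right := by simpa [π_act, π_cell] using congrArg π heq
    have cell_eq : act (g⁻¹ * g') (cell i') = cell i := by simp [← heq]
    have eq_inl : g⁻¹ * g' = inl (g⁻¹ * g').left := SemidirectProduct.ext rfl (by simp [right_eq])
    rw [eq_inl] at cell_eq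
    have orbit_eq := (fiber (cell i) (π_cell i)).unique
      (y₁ := (1, i)) (y₂ := ((g⁻¹ * g').left, i')) (by simp) cell_eq
    rw [Prod.mk.injEq] at orbit_eq
    rw [← orbit_eq.1, map_one, inv_mul_eq_one] at eq_inl
    exact Prod.ext eq_inl orbit_eq.2
  · intro x
    have base : π (act (inr (π x))⁻¹ x) = 1 := by rw [π_act]; simp
    obtain ⟨⟨l, i⟩, hli, -⟩ := fiber _ base
    exact ⟨(inr (π x) * inl l, i), by simp [hli]⟩

end Crys

/-! ### The action of `ℤ⁴ ⋊ ℤ/4` -/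

section CellAction

open Crystal

/-- The cells `((x₁, (x₂, x₃), (h, q)), x₀)` of the product of `ℝ⁴` with a contractible complex on
which `ℤ/4` acts freely. -/
abbrev Cell : Type := (ℤ × (ℤ × ℤ) × ZMod 4 × ℕ) × ℤ

/-- The product of four lines and the periodic resolution of `ℤ/4`. -/
noncomputable def cellComplex : ContractedComplex Cell :=
  (line.prod ((line.prod line).prod (periodicResolution 4))).prod line

/-- The lattice acts by translations. In the coordinates chosen here the generator of `ℤ/4` acts by
a signed permutation matrix, and `ℤ⁴` is the sublattice of `(2ℤ)⁴` where `(x₁ + x₂ + x₃) / 2` is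
even. -/
def latticeTranslation : Lat 4 →* SignedPerm Cell where
  toFun l := ((Line.translation (l.toAdd 1 + l.toAdd 2 - l.toAdd 3)).prod
    (((Line.translation (l.toAdd 1 + l.toAdd 3)).prod (Line.translation (l.toAdd 2))).prod 1)).prod
      (Line.translation (l.toAdd 0))
  map_one' := SignedPerm.ext (Equiv.ext fun c ↦ by simp) (funext fun c ↦ by simp)
  map_mul' l l' := SignedPerm.ext
    (Equiv.ext fun c ↦ by simp; omega) (funext fun c ↦ by simp)

theorem latticeTranslation_sign (l : Lat 4) (c : Cell) : (latticeTranslation l).sign c = 1 := by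
  simp [latticeTranslation]

/-- The action of the generator of `ℤ/4`. -/
def holonomy : SignedPerm Cell :=
  (SignedPerm.prod 1 (Line.rotation.prod (PeriodicResolution.shift 4))).prod Line.reflection

theorem latticeTranslation_mem (l : Lat 4) : latticeTranslation l ∈ cellComplex.automorphisms :=
  ContractedComplex.prod_mem_automorphisms
    (ContractedComplex.prod_mem_automorphisms (Line.translation_mem _)
      (ContractedComplex.prod_mem_automorphisms
        (ContractedComplex.prod_mem_automorphisms (Line.translation_mem _) (Line.translation_mem _))
        (one_mem _)))
    (Line.translation_mem _)

theorem holonomy_mem : holonomy ∈ cellComplex.automorphisms :=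
  ContractedComplex.prod_mem_automorphisms
    (ContractedComplex.prod_mem_automorphisms (one_mem _)
      (ContractedComplex.prod_mem_automorphisms Line.rotation_mem PeriodicResolution.shift_mem))
    Line.reflection_mem

theorem holonomy_pow (k : ℕ) :
    holonomy ^ k =
      (SignedPerm.prod 1 ((Line.rotation ^ k).prod (PeriodicResolution.shift 4 ^ k))).prod
        (Line.reflection ^ k) := by
  rw [holonomy, SignedPerm.prod_pow, SignedPerm.prod_pow, SignedPerm.prod_pow, one_pow]

theorem holonomy_pow_four : holonomy ^ 4 = 1 := by
  rw [holonomy_pow, Line.rotation_pow_four, PeriodicResolution.shift_pow_self,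
    pow_mul Line.reflection 2 2, Line.reflection_sq, one_pow, SignedPerm.prod_one_one,
    SignedPerm.prod_one_one, SignedPerm.prod_one_one]

theorem holonomy_mul_latticeTranslation (l : Fin 4 → ℤ) :
    holonomy * latticeTranslation (.ofAdd l) =
      latticeTranslation (.ofAdd (holM *ᵥ l)) * holonomy := by
  refine SignedPerm.ext (Equiv.ext fun c ↦ ?_) (funext fun c ↦ ?_)
  · simp [holonomy, latticeTranslation, holM, dotProduct, Fin.sum_univ_four]
    omega
  · simp [holonomy, latticeTranslation, Line.deg_add_two_mul, Int.even_add]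

/-- The action of `ℤ⁴ ⋊ ℤ/4` on the cells. -/
noncomputable def cellAction : Crys 4 holM holM_pow →* SignedPerm Cell :=
  crysLift latticeTranslation holonomy holonomy_pow_four holonomy_mul_latticeTranslation

theorem cellAction_inl (l : Lat 4) : cellAction (.inl l) = latticeTranslation l := by
  simp [cellAction, crysLift]

theorem cellAction_inr_one : cellAction (.inr (.ofAdd 1)) = holonomy := by
  rw [cellAction, crysLift, SemidirectProduct.lift_inr]
  exact pow_one holonomy

theorem cellAction_mem (g : Crys 4 holM holM_pow) : cellAction g ∈ cellComplex.automorphisms :=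
  mul_mem (latticeTranslation_mem _) (pow_mem holonomy_mem _)

theorem cellAction_perm_snd (g : Crys 4 holM holM_pow) (c : Cell) :
    ((cellAction g).perm c).1.2.2 = (c.1.2.2.1 + g.right.toAdd, c.1.2.2.2) := by
  change ((latticeTranslation g.left * holonomy ^ g.right.toAdd.val).perm c).1.2.2 = _
  rw [holonomy_pow, PeriodicResolution.shift_pow]
  simp [latticeTranslation, Prod.map]

/-- The orbits of the lattice `{x ∈ (2ℤ)³ | (x₁ + x₂ + x₃) / 2 even}` on the cells of `ℝ³`: the
orbit `(b, c, d, e)` is that of the cell `(b + 2e, c, d)`. -/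
abbrev CubeOrbit : Type := Fin 2 × Fin 2 × Fin 2 × Fin 2

/-- Representatives of the orbits of cells. -/
def orbitCell : Fin 2 × CubeOrbit × ℕ → Cell
  | (a, (b, c, d, e), q) => ((b.val + 2 * e.val, (c.val, d.val), (0, q)), a.val)

/-- The parity of an integer as an element of `Fin 2`. -/
def parity (z : ℤ) : Fin 2 := ⟨(z % 2).toNat, by omega⟩

theorem parity_eq_one_iff {z : ℤ} : parity z = 1 ↔ ¬Even z := by
  simp [parity, Fin.ext_iff]
  grind

theorem parity_eq_zero_iff {z : ℤ} : parity z = 0 ↔ Even z := by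
  simp [parity, Fin.ext_iff]
  grind

theorem parity_neg (z : ℤ) : parity (-z) = parity z := by
  simp [parity, Int.neg_emod_two]

/-- The orbit of a cell of `ℝ³`. -/
def cubeOrbit (x₁ x₂ x₃ : ℤ) : CubeOrbit :=
  (parity x₁, parity x₂, parity x₃, parity (x₁ / 2 + x₂ / 2 + x₃ / 2))

theorem exists_latticeTranslation_orbitCell (x₀ x₁ x₂ x₃ : ℤ) (q : ℕ) :
    ∃ l, (latticeTranslation l).perm (orbitCell (parity x₀, cubeOrbit x₁ x₂ x₃, q)) =
      ((x₁, (x₂, x₃), (0, q)), x₀) := by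
  let l₁ := (x₁ / 2 + x₂ / 2 - x₃ / 2) / 2
  refine ⟨.ofAdd ![x₀ / 2, l₁, x₃ / 2, x₂ / 2 - l₁], ?_⟩
  simp [latticeTranslation, orbitCell, cubeOrbit, parity, l₁]
  omega

theorem injective_latticeTranslation_orbitCell : Function.Injective fun
    p : Lat 4 × (Fin 2 × CubeOrbit × ℕ) ↦ (latticeTranslation p.1).perm (orbitCell p.2) := by
  rintro ⟨l, a, ⟨b, c, d, e⟩, q⟩ ⟨l', a', ⟨b', c', d', e'⟩, q'⟩ heq
  simp [latticeTranslation, orbitCell] at heq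
  refine Prod.ext (Multiplicative.toAdd.injective (funext fun i ↦ ?_)) ?_
  · fin_cases i <;> simp <;> omega
  · simp [Fin.ext_iff]
    omega

theorem bijective_cellAction : Function.Bijective fun
    p : Crys 4 holM holM_pow × (Fin 2 × CubeOrbit × ℕ) ↦ (cellAction p.1).perm (orbitCell p.2) := by
  refine bijective_smul_of_fiber (SignedPerm.permHom.comp cellAction) orbitCell
    (fun c ↦ .ofAdd c.1.2.2.1) (fun g c ↦ ?_) (fun _ ↦ rfl) ?_
  · exact congrArg Multiplicative.ofAdd
      ((congrArg Prod.fst (cellAction_perm_snd g c)).trans (add_comm _ _))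
  · rintro ⟨⟨x₁, ⟨x₂, x₃⟩, h, q⟩, x₀⟩ (rfl : h = 0)
    obtain ⟨l, hl⟩ := exists_latticeTranslation_orbitCell x₀ x₁ x₂ x₃ q
    simp only [MonoidHom.comp_apply, cellAction_inl]
    exact ⟨(l, _), hl, fun p hp ↦ injective_latticeTranslation_orbitCell (hp.trans hl.symm)⟩

/-- The free action of `ℤ⁴ ⋊ ℤ/4` on the cells. -/
noncomputable def freeCellAction :
    cellComplex.FreeAction (Crys 4 holM holM_pow) (Fin 2 × CubeOrbit × ℕ) where
  action := cellAction
  action_mem := cellAction_mem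
  cell := orbitCell
  bijective := bijective_cellAction

theorem freeCellAction_action : freeCellAction.action = cellAction := rfl

theorem freeCellAction_cell : freeCellAction.cell = orbitCell := rfl

end CellAction

namespace ContractedComplex.FreeAction

variable {X Γ I : Type*} [Group Γ] {C : ContractedComplex X} (A : C.FreeAction Γ I)

/-- The invariant functional on chains with prescribed values on the orbit representatives. -/
noncomputable def extend (F : I → ℤ) : (X →₀ ℤ) →ₗ[ℤ] ℤ :=
  linearCombination ℤ fun x ↦
    let p := (Equiv.ofBijective _ A.bijective).symm x
    ((A.action p.1).sign (A.cell p.2) : ℤ) * F p.2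

theorem extend_toEnd_cell (F : I → ℤ) (g : Γ) (i : I) :
    A.extend F (SignedPerm.toEnd X (A.action g) (single (A.cell i) 1)) = F i := by
  have symm_perm := (Equiv.ofBijective _ A.bijective).symm_apply_apply (g, i)
  rw [Equiv.ofBijective_apply] at symm_perm
  simp [-Finsupp.smul_single, extend, symm_perm, ← mul_assoc, ← Units.val_mul, Int.units_mul_self]

theorem extend_toEnd (F : I → ℤ) (g : Γ) (v : X →₀ ℤ) :
    A.extend F (SignedPerm.toEnd X (A.action g) v) = A.extend F v := by
  suffices A.extend F ∘ₗ SignedPerm.toEnd X (A.action g) = A.extend F from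
    LinearMap.congr_fun this v
  refine Finsupp.lhom_ext' fun x ↦ LinearMap.ext_ring ?_
  obtain ⟨⟨h, i⟩, rfl⟩ := A.bijective.2 x
  have single_eq : single ((A.action h).perm (A.cell i)) (1 : ℤ) =
      ((A.action h).sign (A.cell i) : ℤ) •
        SignedPerm.toEnd X (A.action h) (single (A.cell i) 1) := by
    rw [SignedPerm.toEnd_single, smul_smul, ← Units.val_mul, Int.units_mul_self, Units.val_one,
      one_smul]
  change A.extend F (SignedPerm.toEnd X (A.action g) (single ((A.action h).perm (A.cell i)) 1)) =
    A.extend F (single ((A.action h).perm (A.cell i)) 1)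
  rw [single_eq, map_smul, map_smul, map_smul, ← Module.End.mul_apply, ← map_mul, ← map_mul,
    extend_toEnd_cell, extend_toEnd_cell]

theorem freeResolution_δ {X Γ I : Type} [Group Γ] {C : ContractedComplex X}
    (A : C.FreeAction Γ I) (F : I → ℤ) (n : ℕ) (i : {i // C.deg (A.cell i) = n + 1}) :
    A.freeResolution.δ n (fun i ↦ F i.1) i = A.extend F (C.d (single (A.cell i) 1)) := by
  have cochain_eq : A.freeResolution.cochain n (fun i ↦ F i.1) =
      A.extend F ∘ₗ (chainsOfDegree C.deg n).subtype :=
    (A.basis n).ext fun p ↦ by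
      rw [LinearMap.comp_apply, Submodule.subtype_apply, coe_basis, extend_toEnd_cell]
      exact A.freeResolution.cochain_basis n _ p.1 p.2
  have basis_one : (A.basis (n + 1) (1, i) : X →₀ ℤ) = single (A.cell i) 1 := by
    simp [coe_basis]
  rw [← basis_one]
  exact LinearMap.congr_fun cochain_eq _

end ContractedComplex.FreeAction

/-! ### Invariant cochains -/

namespace CubeOrbit

/-- The dimension of the cells in the orbit. -/
def weight : CubeOrbit → ℕ
  | (b, c, d, _) => b + c + d

/-- The coboundary of the complex of invariant cochains on `ℝ³`. -/
def latticeCoboundary (f : CubeOrbit → ℤ) : CubeOrbit → ℤ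
  | (b, c, d, e) =>
    (if b = 1 then f (0, c, d, e + 1) - f (0, c, d, e) else 0) +
    (if c = 1 then (-1) ^ (b : ℕ) * (f (b, 0, d, e + 1) - f (b, 0, d, e)) else 0) +
    (if d = 1 then (-1) ^ (b + c : ℕ) * (f (b, c, 0, e + 1) - f (b, c, 0, e)) else 0)

theorem latticeCoboundary_mk (f : CubeOrbit → ℤ) (b c d e : Fin 2) :
    latticeCoboundary f (b, c, d, e) =
      (if b = 1 then f (0, c, d, e + 1) - f (0, c, d, e) else 0) +
      (if c = 1 then (-1) ^ (b : ℕ) * (f (b, 0, d, e + 1) - f (b, 0, d, e)) else 0) +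
      (if d = 1 then (-1) ^ (b + c : ℕ) * (f (b, c, 0, e + 1) - f (b, c, 0, e)) else 0) := rfl

/-- The action of the generator of `ℤ/4` on invariant cochains on `ℝ³`, twisted by the sign `χ`. -/
def rotate (χ : ℤ) (f : CubeOrbit → ℤ) : CubeOrbit → ℤ
  | (b, c, d, e) => (if c = 1 ∧ d = 0 then -χ else χ) * f (b, d, c, e + c)

/-- The coboundary, on degree `q` cells, of the complex computing the cohomology of `ℤ/4` with
coefficients in a module on which the generator acts by `S`. -/
def periodicCoboundary {M : Type*} [AddCommGroup M] (S : M → M) (q : ℕ) (f : M) : M :=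
  if q = 0 then 0 else if Odd q then S f - f else f + S f + S (S f) + S (S (S f))

/-- The total coboundary on `n`-cells of the double complex formed by `latticeCoboundary` and
`periodicCoboundary`. An orbit `j` of cells of `ℝ³` is paired with the degree `n - weight j` part of
the periodic complex. -/
def coboundary (χ : ℤ) (n : ℕ) (f : CubeOrbit → ℤ) : CubeOrbit → ℤ := fun j ↦
  latticeCoboundary f j + (-1) ^ weight j * periodicCoboundary (rotate χ) (n - weight j) f j

end CubeOrbit

section ExtendCube

open CubeOrbit

/-- The invariant functional on chains with value `f a j` on the orbits `(a, j, q)`. -/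
noncomputable def extendCube (f : Fin 2 → CubeOrbit → ℤ) : (Cell →₀ ℤ) →ₗ[ℤ] ℤ :=
  freeCellAction.extend fun i ↦ f i.1 i.2.1

theorem extendCube_single_zero (f : Fin 2 → CubeOrbit → ℤ) (x₀ x₁ x₂ x₃ : ℤ) (q : ℕ) :
    extendCube f (single ((x₁, (x₂, x₃), (0, q)), x₀) 1) = f (parity x₀) (cubeOrbit x₁ x₂ x₃) := by
  obtain ⟨l, hl⟩ := exists_latticeTranslation_orbitCell x₀ x₁ x₂ x₃ q
  have value := freeCellAction.extend_toEnd_cell (fun i ↦ f i.1 i.2.1) (.inl l)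
    (parity x₀, cubeOrbit x₁ x₂ x₃, q)
  rwa [freeCellAction_action, cellAction_inl, freeCellAction_cell, SignedPerm.toEnd_single,
    latticeTranslation_sign, Units.val_one, one_smul, hl] at value

theorem extendCube_toEnd_holonomy (f : Fin 2 → CubeOrbit → ℤ) (v : Cell →₀ ℤ) :
    extendCube f (SignedPerm.toEnd Cell holonomy v) = extendCube f v := by
  rw [← cellAction_inr_one]
  exact freeCellAction.extend_toEnd _ _ v

/-- The action of the generator of `ℤ/4` on invariant cochains. -/
def rotateCube (f : Fin 2 → CubeOrbit → ℤ) : Fin 2 → CubeOrbit → ℤ :=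
  fun a ↦ rotate ((-1) ^ (a : ℕ)) (f a)

theorem extendCube_single_add_one (f : Fin 2 → CubeOrbit → ℤ) (x₀ x₁ x₂ x₃ : ℤ) (h : ZMod 4)
    (q : ℕ) :
    extendCube f (single ((x₁, (x₂, x₃), (h + 1, q)), x₀) 1) =
      (if Even x₃ ∧ ¬Even x₂ then -1 else 1) * (-1) ^ Line.deg x₀ *
        extendCube f (single ((x₁, (x₃, -x₂), (h, q)), -x₀) 1) := by
  rw [← extendCube_toEnd_holonomy f (single ((x₁, (x₃, -x₂), (h, q)), -x₀) 1)]
  split_ifs with hx <;> rcases neg_one_pow_eq_or ℤ (Line.deg x₀) with hd | hd <;>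
  simp [-Finsupp.smul_single, -Int.not_even_iff_odd, holonomy, Line.deg_neg, hx, hd]

theorem rotateCube_parity (f : Fin 2 → CubeOrbit → ℤ) (x₀ x₁ x₂ x₃ : ℤ) :
    rotateCube f (parity x₀) (cubeOrbit x₁ x₂ x₃) =
      (if Even x₃ ∧ ¬Even x₂ then -1 else 1) * (-1) ^ Line.deg x₀ *
        f (parity (-x₀)) (cubeOrbit x₁ x₃ (-x₂)) := by
  have orbit_eq : cubeOrbit x₁ x₃ (-x₂) = (parity x₁, parity x₃, parity x₂,
      parity (x₁ / 2 + x₂ / 2 + x₃ / 2) + parity x₂) := by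
    simp [cubeOrbit, parity, Fin.ext_iff, Fin.val_add]
    omega
  rw [orbit_eq, parity_neg, rotateCube, cubeOrbit, rotate]
  simp only [parity_eq_one_iff, parity_eq_zero_iff, and_comm (a := Even x₃)]
  change (if _ then -(-1) ^ Line.deg x₀ else (-1) ^ Line.deg x₀) * _ = _
  split_ifs <;> ring

theorem extendCube_single_natCast (f : Fin 2 → CubeOrbit → ℤ) (x₀ x₁ x₂ x₃ : ℤ) (k q : ℕ) :
    extendCube f (single ((x₁, (x₂, x₃), ((k : ZMod 4), q)), x₀) 1) =
      (rotateCube^[k] f) (parity x₀) (cubeOrbit x₁ x₂ x₃) := by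
  induction k generalizing x₀ x₂ x₃ with
  | zero => simpa using extendCube_single_zero f x₀ x₁ x₂ x₃ q
  | succ k ih =>
    rw [Nat.cast_succ, extendCube_single_add_one, ih, Function.iterate_succ_apply',
      rotateCube_parity]

theorem extendCube_periodic_d (f : Fin 2 → CubeOrbit → ℤ) (x₀ x₁ x₂ x₃ : ℤ) (q : ℕ) :
    extendCube f (cross (cross (single x₁ 1) (cross (single (x₂, x₃) 1)
      ((periodicResolution 4).d (single (0, q) 1)))) (single x₀ 1)) =
      periodicCoboundary rotateCube q f (parity x₀) (cubeOrbit x₁ x₂ x₃) := by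
  change extendCube f (cross (cross (single x₁ 1) (cross (single (x₂, x₃) 1)
      (PeriodicResolution.d 4 (single (0, q) 1)))) (single x₀ 1)) = _
  rcases q with _ | q
  · simp [PeriodicResolution.d_zero, periodicCoboundary]
  by_cases hq : Even q
  · have h0 := extendCube_single_natCast f x₀ x₁ x₂ x₃ 0 q
    have h1 := extendCube_single_natCast f x₀ x₁ x₂ x₃ 1 q
    simp_all [PeriodicResolution.d_succ_of_even _ hq, periodicCoboundary, parity_simps]
  · have sum_eq : ∑ h : ZMod 4, extendCube f (single ((x₁, (x₂, x₃), (h, q)), x₀) 1) =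
        ∑ h : Fin 4, (rotateCube^[h] f) (parity x₀) (cubeOrbit x₁ x₂ x₃) :=
      Finset.sum_congr rfl fun (h : ZMod 4) _ ↦ by
        conv_lhs => rw [← ZMod.natCast_zmod_val h, extendCube_single_natCast]
        rfl
    rw [Fin.sum_univ_four] at sum_eq
    simpa [PeriodicResolution.d_succ_of_odd _ hq, periodicCoboundary, hq, parity_simps]
      using sum_eq

theorem line_d_single (c : ℤ) :
    line.d (single c 1) = if Even c then 0 else single (c + 1) 1 - single (c - 1) 1 := by
  simp [line, Line.d]

theorem cubeOrbit_faces₁ {x₁ : ℤ} (h : ¬Even x₁) (x₂ x₃ : ℤ) :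
    cubeOrbit (x₁ + 1) x₂ x₃ = (0, parity x₂, parity x₃, parity (x₁ / 2 + x₂ / 2 + x₃ / 2) + 1) ∧
      cubeOrbit (x₁ - 1) x₂ x₃ = (0, parity x₂, parity x₃, parity (x₁ / 2 + x₂ / 2 + x₃ / 2)) := by
  rw [Int.not_even_iff] at h
  simp [cubeOrbit, parity, Fin.ext_iff, Fin.val_add]
  omega

theorem cubeOrbit_faces₂ {x₂ : ℤ} (h : ¬Even x₂) (x₁ x₃ : ℤ) :
    cubeOrbit x₁ (x₂ + 1) x₃ = (parity x₁, 0, parity x₃, parity (x₁ / 2 + x₂ / 2 + x₃ / 2) + 1) ∧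
      cubeOrbit x₁ (x₂ - 1) x₃ = (parity x₁, 0, parity x₃, parity (x₁ / 2 + x₂ / 2 + x₃ / 2)) := by
  rw [Int.not_even_iff] at h
  simp [cubeOrbit, parity, Fin.ext_iff, Fin.val_add]
  omega

theorem cubeOrbit_faces₃ {x₃ : ℤ} (h : ¬Even x₃) (x₁ x₂ : ℤ) :
    cubeOrbit x₁ x₂ (x₃ + 1) = (parity x₁, parity x₂, 0, parity (x₁ / 2 + x₂ / 2 + x₃ / 2) + 1) ∧
      cubeOrbit x₁ x₂ (x₃ - 1) = (parity x₁, parity x₂, 0, parity (x₁ / 2 + x₂ / 2 + x₃ / 2)) := by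
  rw [Int.not_even_iff] at h
  simp [cubeOrbit, parity, Fin.ext_iff, Fin.val_add]
  omega

theorem parity_add_one_eq_parity_sub_one (z : ℤ) : parity (z + 1) = parity (z - 1) := by
  simp [parity, Fin.ext_iff]
  omega

variable (f : Fin 2 → CubeOrbit → ℤ) (x₀ x₁ x₂ x₃ : ℤ) (q : ℕ)

theorem extendCube_line_d₀ :
    extendCube f (cross (single (x₁, (x₂, x₃), (0, q)) 1) (line.d (single x₀ 1))) = 0 := by
  by_cases h : Even x₀ <;>
    simp [line_d_single, h, extendCube_single_zero, parity_add_one_eq_parity_sub_one]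

theorem extendCube_line_d₁ :
    extendCube f (cross (cross (line.d (single x₁ 1)) (single ((x₂, x₃), (0, q)) 1))
      (single x₀ 1)) =
      if parity x₁ = 1 then
        f (parity x₀) (0, parity x₂, parity x₃, parity (x₁ / 2 + x₂ / 2 + x₃ / 2) + 1) -
          f (parity x₀) (0, parity x₂, parity x₃, parity (x₁ / 2 + x₂ / 2 + x₃ / 2))
      else 0 := by
  by_cases h : Even x₁
  · simp [line_d_single, parity_eq_one_iff, h]
  · simp [line_d_single, parity_eq_one_iff, h, extendCube_single_zero, cubeOrbit_faces₁ h]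

theorem extendCube_line_d₂ :
    extendCube f (cross (cross (single x₁ 1)
      (cross (cross (line.d (single x₂ 1)) (single x₃ 1)) (single (0, q) 1))) (single x₀ 1)) =
      if parity x₂ = 1 then
        f (parity x₀) (parity x₁, 0, parity x₃, parity (x₁ / 2 + x₂ / 2 + x₃ / 2) + 1) -
          f (parity x₀) (parity x₁, 0, parity x₃, parity (x₁ / 2 + x₂ / 2 + x₃ / 2))
      else 0 := by
  by_cases h : Even x₂
  · simp [line_d_single, parity_eq_one_iff, h]
  · simp [line_d_single, parity_eq_one_iff, h, extendCube_single_zero, cubeOrbit_faces₂ h]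

theorem extendCube_line_d₃ :
    extendCube f (cross (cross (single x₁ 1)
      (cross (cross (single x₂ 1) (line.d (single x₃ 1))) (single (0, q) 1))) (single x₀ 1)) =
      if parity x₃ = 1 then
        f (parity x₀) (parity x₁, parity x₂, 0, parity (x₁ / 2 + x₂ / 2 + x₃ / 2) + 1) -
          f (parity x₀) (parity x₁, parity x₂, 0, parity (x₁ / 2 + x₂ / 2 + x₃ / 2))
      else 0 := by
  by_cases h : Even x₃
  · simp [line_d_single, parity_eq_one_iff, h]
  · simp [line_d_single, parity_eq_one_iff, h, extendCube_single_zero, cubeOrbit_faces₃ h]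

theorem extendCube_d_single :
    extendCube f (cellComplex.d (single ((x₁, (x₂, x₃), (0, q)), x₀) 1)) =
      latticeCoboundary (f (parity x₀)) (cubeOrbit x₁ x₂ x₃) +
        (-1) ^ weight (cubeOrbit x₁ x₂ x₃) *
          periodicCoboundary rotateCube q f (parity x₀) (cubeOrbit x₁ x₂ x₃) := by
  have deg_eq : ∀ z, line.deg z = (parity z : ℕ) := fun _ ↦ rfl
  simp [-Finsupp.smul_single, cellComplex, ContractedComplex.prod, ContractedComplex.prodD,
    extendCube_line_d₀, extendCube_line_d₁, extendCube_line_d₂, extendCube_line_d₃,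
    extendCube_periodic_d, deg_eq, latticeCoboundary_mk, cubeOrbit, CubeOrbit.weight, pow_add]
  split_ifs <;> ring

theorem periodicCoboundary_rotateCube (a : Fin 2) :
    periodicCoboundary rotateCube q f a = periodicCoboundary (rotate ((-1) ^ (a : ℕ))) q (f a) := by
  unfold periodicCoboundary
  split_ifs <;> rfl

theorem parity_natCast_val (a : Fin 2) : parity (a : ℕ) = a := by
  simp [parity, Fin.ext_iff]
  omega

theorem cubeOrbit_natCast_val (b c d e : Fin 2) :
    cubeOrbit ((b : ℕ) + 2 * (e : ℕ)) (c : ℕ) (d : ℕ) = (b, c, d, e) := by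
  simp [cubeOrbit, parity, Fin.ext_iff]
  omega

theorem extendCube_d_orbitCell (a : Fin 2) (j : CubeOrbit) (q : ℕ) :
    extendCube f (cellComplex.d (single (orbitCell (a, j, q)) 1)) =
      coboundary ((-1) ^ (a : ℕ)) (q + weight j) (f a) j := by
  obtain ⟨b, c, d, e⟩ := j
  rw [orbitCell, extendCube_d_single, parity_natCast_val, cubeOrbit_natCast_val,
    periodicCoboundary_rotateCube, coboundary, Nat.add_sub_cancel]

end ExtendCube

namespace CubeOrbit

theorem latticeCoboundary_add (f g : CubeOrbit → ℤ) :
    latticeCoboundary (f + g) = latticeCoboundary f + latticeCoboundary g := by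
  funext ⟨b, c, d, e⟩
  simp only [latticeCoboundary_mk, Pi.add_apply]
  split_ifs <;> ring

theorem rotate_add (χ : ℤ) (f g : CubeOrbit → ℤ) : rotate χ (f + g) = rotate χ f + rotate χ g :=
  funext fun _ ↦ mul_add _ _ _

theorem periodicCoboundary_add {M : Type*} [AddCommGroup M] {S : M → M}
    (hS : ∀ f g, S (f + g) = S f + S g) (q : ℕ) (f g : M) :
    periodicCoboundary S q (f + g) = periodicCoboundary S q f + periodicCoboundary S q g := by
  simp only [periodicCoboundary, hS]
  split_ifs <;> abel

theorem periodicCoboundary_add_two {M : Type*} [AddCommGroup M] (S : M → M) {q : ℕ} (hq : q ≠ 0) :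
    periodicCoboundary S (q + 2) = periodicCoboundary S q := by
  funext f
  simp [periodicCoboundary, hq, Nat.odd_add]

theorem coboundary_add (χ : ℤ) (n : ℕ) (f g : CubeOrbit → ℤ) :
    coboundary χ n (f + g) = coboundary χ n f + coboundary χ n g := by
  funext j
  simp only [coboundary, latticeCoboundary_add, periodicCoboundary_add (rotate_add χ),
    Pi.add_apply]
  ring

theorem weight_lt_four (j : CubeOrbit) : weight j < 4 := by
  obtain ⟨b, c, d, e⟩ := j
  simp only [weight]
  omega

theorem coboundary_add_two (χ : ℤ) {n : ℕ} (hn : 4 ≤ n) :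
    coboundary χ (n + 2) = coboundary χ n := by
  funext f j
  have hj := weight_lt_four j
  rw [coboundary, coboundary, Nat.sub_add_comm (by omega), periodicCoboundary_add_two _ (by omega)]

/-- The invariant cochains supported on the orbits of cells of dimension less than `n`: these are
the orbits that occur in the double complex in total degree `n - 1`. -/
def cochains (n : ℕ) : AddSubgroup (CubeOrbit → ℤ) where
  carrier := {f | ∀ j, n ≤ weight j → f j = 0}
  add_mem' hf hg j hj := by simp [hf j hj, hg j hj]
  zero_mem' _ _ := rfl
  neg_mem' hf j hj := by simp [hf j hj]

theorem mem_cochains {n : ℕ} {f : CubeOrbit → ℤ} :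
    f ∈ cochains n ↔ ∀ j, n ≤ weight j → f j = 0 := Iff.rfl

theorem cochains_eq_top {n : ℕ} (hn : 4 ≤ n) : cochains n = ⊤ :=
  eq_top_iff.2 fun _ _ j hj ↦ absurd (weight_lt_four j) (by omega)

theorem latticeCoboundary_mem {n : ℕ} {f : CubeOrbit → ℤ} (hf : f ∈ cochains n) :
    latticeCoboundary f ∈ cochains (n + 1) := by
  rintro ⟨b, c, d, e⟩ hj
  have vanish {j : CubeOrbit} (h : weight j + 1 = weight (b, c, d, e)) : f j = 0 := hf j (by omega)
  rw [latticeCoboundary_mk, ite_eq_right_iff.2, ite_eq_right_iff.2, ite_eq_right_iff.2, add_zero,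
    add_zero]
  all_goals
    rintro rfl
    rw [vanish (by simp only [CubeOrbit.weight]; omega),
      vanish (by simp only [CubeOrbit.weight]; omega)]
    simp only [sub_self, mul_zero]

theorem coboundary_mem (χ : ℤ) {n : ℕ} {f : CubeOrbit → ℤ} (hf : f ∈ cochains n) :
    coboundary χ n f ∈ cochains (n + 1) := fun j hj ↦ by
  rw [coboundary, latticeCoboundary_mem hf j hj, Nat.sub_eq_zero_of_le (by omega)]
  simp [periodicCoboundary]

/-- `coboundary` as a homomorphism between groups of cochains. -/
def coboundaryHom (χ : ℤ) (n : ℕ) : cochains n →+ cochains (n + 1) :=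
  AddMonoidHom.mk' (fun f ↦ ⟨coboundary χ n f, coboundary_mem χ f.2⟩) fun f g ↦
    Subtype.ext (coboundary_add χ n f g)

/-- `p` identifies the cohomology of the `χ`-twisted double complex in total degree `n` with
`Q`. -/
structure ComputesCohomology (χ : ℤ) (n : ℕ) {Q : Type*} [AddCommGroup Q]
    (p : (CubeOrbit → ℤ) →+ Q) : Prop where
  apply_coboundary : ∀ y ∈ cochains n, p (coboundary χ n y) = 0
  exists_primitive : ∀ x ∈ cochains (n + 1), coboundary χ (n + 1) x = 0 → p x = 0 →
    ∃ y ∈ cochains n, coboundary χ n y = x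
  exists_cocycle : ∀ q, ∃ x ∈ cochains (n + 1), coboundary χ (n + 1) x = 0 ∧ p x = q

namespace ComputesCohomology

variable {χ : ℤ} {n : ℕ} {Q : Type*} [AddCommGroup Q] {p : (CubeOrbit → ℤ) →+ Q}

theorem isHomologyMap (h : ComputesCohomology χ n p) :
    IsHomologyMap (coboundaryHom χ n) (coboundaryHom χ (n + 1))
      (p.comp (cochains (n + 1)).subtype) where
  apply_boundary y := h.apply_coboundary y y.2
  exists_primitive x hdx hpx := by
    obtain ⟨y, hy, hdy⟩ := h.exists_primitive x x.2 (congrArg Subtype.val hdx) hpx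
    exact ⟨⟨y, hy⟩, Subtype.ext hdy⟩
  exists_cycle q := by
    obtain ⟨x, hx, hdx, hpx⟩ := h.exists_cocycle q
    exact ⟨⟨x, hx⟩, Subtype.ext hdx, hpx⟩

theorem add_two (h : ComputesCohomology χ n p) (hn : 4 ≤ n) : ComputesCohomology χ (n + 2) p := by
  obtain ⟨apply_coboundary, exists_primitive, exists_cocycle⟩ := h
  rw [cochains_eq_top hn] at apply_coboundary exists_primitive
  rw [cochains_eq_top (by omega)] at exists_primitive exists_cocycle
  constructor <;> simpa only [cochains_eq_top (show 4 ≤ n + 2 by omega),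
    cochains_eq_top (show 4 ≤ n + 2 + 1 by omega), coboundary_add_two χ hn,
    Nat.add_right_comm n 2 1, coboundary_add_two χ (show 4 ≤ n + 1 by omega)]

theorem add_two_mul (h : ComputesCohomology χ n p) (hn : 4 ≤ n) (k : ℕ) :
    ComputesCohomology χ (n + 2 * k) p := by
  induction k with
  | zero => exact h
  | succ k ih => exact ih.add_two (by omega)

end ComputesCohomology

end CubeOrbit

section OrbitCochains

open CubeOrbit

theorem deg_orbitCell (a : Fin 2) (j : CubeOrbit) (q : ℕ) :
    cellComplex.deg (orbitCell (a, j, q)) = weight j + q + a := by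
  obtain ⟨b, c, d, e⟩ := j
  simp [cellComplex, ContractedComplex.prod, orbitCell, line, Line.deg, CubeOrbit.weight,
    periodicResolution]
  omega

/-- The equivariant `n`-cochain with values `f.1 j` on the orbits `(0, j, q)` and `f.2 j` on the
orbits `(1, j, q)`. -/
def orbitCochain (n : ℕ) :
    cochains (n + 1) × cochains n →+ (freeCellAction.freeResolution.I n → ℤ) :=
  AddMonoidHom.mk' (fun f i ↦ (![f.1, f.2] : Fin 2 → CubeOrbit → ℤ) i.1.1 i.1.2.1) fun _ _ ↦ by
    funext ⟨⟨a, j, q⟩, h⟩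
    fin_cases a <;> rfl

theorem injective_orbitCochain (n : ℕ) : Function.Injective (orbitCochain n) := by
  refine (injective_iff_map_eq_zero _).2 fun f hf ↦ Prod.ext ?_ ?_
  · refine Subtype.ext (funext fun j ↦ ?_)
    by_cases hj : weight j ≤ n
    · exact congrFun hf ⟨(0, j, n - weight j), (deg_orbitCell ..).trans (by simp; omega)⟩
    · exact f.1.2 j (by omega)
  · refine Subtype.ext (funext fun j ↦ ?_)
    by_cases hj : weight j < n
    · exact congrFun hf ⟨(1, j, n - 1 - weight j), (deg_orbitCell ..).trans (by simp; omega)⟩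
    · exact f.2.2 j (by omega)

theorem surjective_orbitCochain (n : ℕ) : Function.Surjective (orbitCochain n) := by
  intro F
  let G (a : Fin 2) (j : CubeOrbit) (q : ℕ) : ℤ :=
    if h : cellComplex.deg (orbitCell (a, j, q)) = n then F ⟨(a, j, q), h⟩ else 0
  refine ⟨(⟨fun j ↦ G 0 j (n - weight j), fun j hj ↦ dif_neg ?_⟩,
    ⟨fun j ↦ G 1 j (n - 1 - weight j), fun j hj ↦ dif_neg ?_⟩), ?_⟩
  · rw [deg_orbitCell, Fin.val_zero]
    omega
  · rw [deg_orbitCell, Fin.val_one]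
    omega
  funext ⟨⟨a, j, q⟩, h⟩
  have deg_eq := (deg_orbitCell a j q).symm.trans h
  have value : G a j q = F ⟨(a, j, q), h⟩ := dif_pos h
  rw [← value]
  obtain rfl | rfl : a = 0 ∨ a = 1 := by omega
  · have q_eq : n - weight j = q := by rw [Fin.val_zero] at deg_eq; omega
    exact congrArg (G 0 j) q_eq
  · have q_eq : n - 1 - weight j = q := by rw [Fin.val_one] at deg_eq; omega
    exact congrArg (G 1 j) q_eq

/-- `orbitCochain` as an isomorphism. -/
noncomputable def orbitCochainEquiv (n : ℕ) :
    cochains (n + 1) × cochains n ≃+ (freeCellAction.freeResolution.I n → ℤ) :=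
  AddEquiv.ofBijective (orbitCochain n) ⟨injective_orbitCochain n, surjective_orbitCochain n⟩

theorem δ_orbitCochainEquiv (n : ℕ) (f : cochains (n + 1) × cochains n) :
    freeCellAction.freeResolution.δ n (orbitCochainEquiv n f) =
      orbitCochainEquiv (n + 1) ((coboundaryHom 1 (n + 1)).prodMap (coboundaryHom (-1) n) f) := by
  funext ⟨⟨a, j, q⟩, h⟩
  have deg_eq := (deg_orbitCell a j q).symm.trans h
  have δ_eq := freeCellAction.freeResolution_δ
    (fun i ↦ (![f.1, f.2] : Fin 2 → CubeOrbit → ℤ) i.1 i.2.1) n ⟨(a, j, q), h⟩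
  have extend_eq := extendCube_d_orbitCell ![f.1, f.2] a j q
  obtain rfl | rfl : a = 0 ∨ a = 1 := by omega
  · have total_eq : q + weight j = n + 1 := by rw [← deg_eq, Fin.val_zero, add_zero, add_comm]
    rw [total_eq, Fin.val_zero, pow_zero] at extend_eq
    exact δ_eq.trans extend_eq
  · have total_eq : q + weight j = n := by rw [Fin.val_one] at deg_eq; omega
    rw [total_eq, Fin.val_one, pow_one] at extend_eq
    exact δ_eq.trans extend_eq

theorem nonempty_H_addEquiv {n : ℕ} {Q Q' : Type*} [AddCommGroup Q] [AddCommGroup Q']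
    {p : (CubeOrbit → ℤ) →+ Q} {p' : (CubeOrbit → ℤ) →+ Q'} (hp : ComputesCohomology 1 (n + 1) p)
    (hp' : ComputesCohomology (-1) n p') : Nonempty (H (n + 1) ≃+ Q × Q') := by
  have orbit_homology := (hp.isHomologyMap.prodMap hp'.isHomologyMap).comp_addEquiv
    (orbitCochainEquiv n).symm (orbitCochainEquiv (n + 1)).symm (orbitCochainEquiv (n + 2)).symm
    (f' := freeCellAction.freeResolution.δ n) (g' := freeCellAction.freeResolution.δ (n + 1))
    (fun y ↦ by rw [AddEquiv.symm_apply_eq, ← δ_orbitCochainEquiv, AddEquiv.apply_symm_apply])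
    (fun y ↦ by rw [AddEquiv.symm_apply_eq, ← δ_orbitCochainEquiv, AddEquiv.apply_symm_apply])
  exact freeCellAction.freeResolution.nonempty_groupCohomology_addEquiv orbit_homology

end OrbitCochains

/-! ### Cohomology of the twisted double complexes -/

namespace CubeOrbit

/-- The value of a cochain on an orbit, as a homomorphism. -/
def value (j : CubeOrbit) : (CubeOrbit → ℤ) →+ ℤ := Pi.evalAddMonoidHom _ j

theorem value_apply (j : CubeOrbit) (f : CubeOrbit → ℤ) : value j f = f j := rfl

/-- The reduction modulo `d` of an integer-valued homomorphism. -/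
def reduceMod {M : Type*} [AddCommGroup M] (d : ℕ) (φ : M →+ ℤ) : M →+ ZMod d :=
  (Int.castAddHom (ZMod d)).comp φ

theorem reduceMod_apply {M : Type*} [AddCommGroup M] (d : ℕ) (φ : M →+ ℤ) (x : M) :
    reduceMod d φ x = (φ x : ZMod d) := rfl

theorem reduceMod_eq_zero_iff {M : Type*} [AddCommGroup M] (d : ℕ) (φ : M →+ ℤ) (x : M) :
    reduceMod d φ x = 0 ↔ (d : ℤ) ∣ φ x := ZMod.intCast_zmod_eq_zero_iff_dvd _ d

section Cases

/-! The functionals, primitives and cocycles below are read off from Smith normal forms of the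
coboundary matrices. -/

attribute [local simp] coboundary latticeCoboundary rotate periodicCoboundary CubeOrbit.weight
  mem_cochains value_apply reduceMod_eq_zero_iff Nat.odd_iff Fin.forall_fin_two funext_iff

theorem computesCohomology_one_one : ComputesCohomology 1 1
    (value (1, 0, 0, 0) - value (0, 0, 1, 0)) where
  apply_coboundary y hy := by
    simp at hy
    simp
  exists_primitive x hx hdx hpx := by
    refine ⟨fun
      | (0, 0, 0, 1) => x (0, 0, 1, 0)
      | _ => 0, by simp, ?_⟩
    simp at hx hdx hpx ⊢
    omega
  exists_cocycle := by
    intro s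
    refine ⟨fun
      | (1, 0, 0, 0) => s
      | (1, 0, 0, 1) => s
      | _ => 0, by simp, by simp, by simp⟩

set_option maxHeartbeats 1000000 in
-- The coboundary unfolds to one equation for each of the sixteen orbits.
theorem computesCohomology_one_two : ComputesCohomology 1 2
    ((value (0, 1, 1, 0) + value (1, 0, 1, 1) + value (1, 1, 0, 0)).prod
      (reduceMod 4 (value (0, 0, 0, 0)))) where
  apply_coboundary y hy := by
    simp at hy
    simp
    omega
  exists_primitive x hx hdx hpx := by
    simp only [AddMonoidHom.prod_apply, Prod.mk_eq_zero, reduceMod_eq_zero_iff] at hpx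
    obtain ⟨hs, ⟨t, ht⟩⟩ := hpx
    refine ⟨fun
      | (0, 0, 0, 0) => t
      | (0, 0, 0, 1) => -x (1, 0, 0, 1) + t
      | (0, 0, 1, 0) => x (0, 0, 1, 1) + x (0, 1, 0, 0) - x (0, 1, 1, 0)
      | (0, 1, 0, 0) => x (0, 1, 0, 0) + x (1, 0, 0, 1)
      | (0, 1, 0, 1) => -x (0, 0, 1, 1) + x (1, 0, 0, 1)
      | (1, 0, 0, 0) => x (0, 0, 1, 1) + x (0, 1, 0, 0) + x (1, 1, 0, 0)
      | _ => 0, by simp, ?_⟩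
    simp at hx hdx hs ht ⊢
    omega
  exists_cocycle := by
    rintro ⟨s, t⟩
    obtain ⟨t, rfl⟩ := ZMod.intCast_surjective t
    refine ⟨fun
      | (0, 0, 0, 0) => t
      | (0, 0, 0, 1) => t
      | (0, 0, 1, 0) => s
      | (0, 1, 0, 1) => s
      | (0, 1, 1, 1) => 2 * s
      | (1, 0, 1, 0) => -s
      | (1, 0, 1, 1) => s
      | _ => 0, by simp, ?_, by simp [reduceMod_apply]⟩
    simp
    omega

set_option maxHeartbeats 1000000 in
-- The coboundary unfolds to one equation for each of the sixteen orbits.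
theorem computesCohomology_one_three : ComputesCohomology 1 3
    ((value (1, 1, 1, 0) + value (1, 1, 1, 1)).prod
      (reduceMod 2 (value (0, 1, 0, 0) + value (0, 1, 1, 1) - value (1, 0, 0, 0)
        - value (1, 1, 0, 0) + value (1, 1, 0, 1) - value (1, 1, 1, 1)))) where
  apply_coboundary y hy := by
    simp at hy
    simp
    omega
  exists_primitive x _ hdx hpx := by
    simp only [AddMonoidHom.prod_apply, Prod.mk_eq_zero, reduceMod_eq_zero_iff] at hpx
    obtain ⟨hs, ⟨t, ht⟩⟩ := hpx
    refine ⟨fun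
      | (0, 0, 0, 1) => x (1, 0, 0, 0)
      | (0, 0, 1, 0) => x (0, 1, 1, 1) - x (1, 1, 0, 0) - x (1, 1, 1, 1) - t
      | (0, 1, 0, 1) => -x (1, 1, 0, 1) + t
      | (0, 1, 1, 1) => -x (1, 1, 0, 0) - x (1, 1, 0, 1) - x (1, 1, 1, 1)
      | (1, 0, 0, 1) => t
      | (1, 0, 1, 1) => -x (0, 1, 1, 1) - x (1, 0, 1, 0) - x (1, 1, 0, 1) + x (1, 1, 1, 1)
      | (1, 1, 0, 0) => x (0, 1, 1, 1) + x (1, 0, 1, 0) - x (1, 1, 0, 0) - x (1, 1, 1, 1)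
      | _ => 0, by simp, ?_⟩
    simp at hdx hs ht ⊢
    omega
  exists_cocycle := by
    rintro ⟨s, t⟩
    obtain ⟨t, rfl⟩ := ZMod.intCast_surjective t
    refine ⟨fun
      | (0, 0, 1, 0) => t
      | (0, 0, 1, 1) => -t
      | (0, 1, 0, 0) => t
      | (0, 1, 0, 1) => -t
      | (1, 0, 0, 1) => -s - 2 * t
      | (1, 0, 1, 1) => s
      | (1, 1, 1, 0) => s
      | _ => 0, by simp, ?_, by simp [reduceMod_apply]⟩
    simp
    omega

set_option maxHeartbeats 1000000 in
-- The coboundary unfolds to one equation for each of the sixteen orbits.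
theorem computesCohomology_one_four : ComputesCohomology 1 4
    ((reduceMod 4 (value (0, 0, 0, 0))).prod
      (reduceMod 2 (value (0, 1, 1, 0) - value (1, 0, 1, 0) + value (1, 1, 0, 0)))) where
  apply_coboundary y _ := by
    simp
    omega
  exists_primitive x _ hdx hpx := by
    simp only [AddMonoidHom.prod_apply, Prod.mk_eq_zero, reduceMod_eq_zero_iff] at hpx
    obtain ⟨⟨s, hs⟩, ⟨t, ht⟩⟩ := hpx
    refine ⟨fun
      | (0, 0, 0, 0) => s
      | (0, 0, 0, 1) => -x (1, 0, 0, 1) + s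
      | (0, 0, 1, 0) => x (0, 1, 0, 1) - x (1, 0, 0, 1)
      | (0, 0, 1, 1) => x (0, 0, 1, 1) - x (1, 0, 0, 1)
      | (0, 1, 0, 0) => -x (0, 0, 1, 1) + x (0, 1, 0, 1) + x (1, 0, 1, 0) - x (1, 1, 0, 0)
      | (0, 1, 1, 0) => t
      | (1, 0, 0, 0) => -x (0, 0, 1, 1) + x (0, 1, 0, 1) + x (1, 0, 1, 0)
      | (1, 1, 1, 0) => x (1, 1, 1, 0) + t
      | _ => 0, by simp, ?_⟩
    simp at hdx hs ht ⊢
    omega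
  exists_cocycle := by
    rintro ⟨s, t⟩
    obtain ⟨s, rfl⟩ := ZMod.intCast_surjective s
    obtain ⟨t, rfl⟩ := ZMod.intCast_surjective t
    refine ⟨fun
      | (0, 0, 0, 0) => s
      | (0, 0, 0, 1) => s
      | (0, 1, 1, 0) => t
      | (0, 1, 1, 1) => t
      | _ => 0, by simp, by simp, by simp [reduceMod_apply]⟩

theorem computesCohomology_one_five : ComputesCohomology 1 5
    ((reduceMod 4 (value (1, 0, 0, 0) + value (1, 0, 0, 1))).prod
      (reduceMod 2 (value (0, 1, 0, 1) - value (0, 1, 1, 0) - value (1, 0, 0, 1)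
        + value (1, 0, 1, 0) - value (1, 0, 1, 1) + value (1, 1, 1, 0)))) where
  apply_coboundary y _ := by
    simp
    omega
  exists_primitive x _ hdx hpx := by
    simp only [AddMonoidHom.prod_apply, Prod.mk_eq_zero, reduceMod_eq_zero_iff] at hpx
    obtain ⟨⟨s, hs⟩, ⟨t, ht⟩⟩ := hpx
    refine ⟨fun
      | (0, 0, 0, 1) => -x (1, 0, 0, 1)
      | (0, 1, 0, 0) => x (0, 1, 0, 1) - x (1, 0, 0, 1)
      | (0, 1, 1, 1) => -x (0, 1, 0, 1) + x (0, 1, 1, 0) + x (1, 0, 0, 1)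
      | (1, 0, 0, 0) => -s
      | (1, 0, 1, 0) => -x (1, 0, 1, 0) - s
      | (1, 0, 1, 1) => -x (0, 1, 0, 1) + x (1, 0, 0, 1) - x (1, 1, 0, 0) - s
      | (1, 1, 0, 1) => -x (0, 1, 0, 1) + x (1, 0, 0, 1) + x (1, 0, 1, 1) - x (1, 1, 0, 0) - 2 * s
      | (1, 1, 1, 0) => -s - t
      | _ => 0, by simp, ?_⟩
    simp at hdx hs ht ⊢
    omega
  exists_cocycle := by
    rintro ⟨s, t⟩
    obtain ⟨s, rfl⟩ := ZMod.intCast_surjective s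
    obtain ⟨t, rfl⟩ := ZMod.intCast_surjective t
    refine ⟨fun
      | (1, 0, 0, 0) => s
      | (1, 1, 0, 1) => s
      | (1, 1, 1, 0) => t
      | (1, 1, 1, 1) => s + t
      | _ => 0, by simp, by simp, by simp [reduceMod_apply]⟩

theorem computesCohomology_neg_one_one : ComputesCohomology (-1) 1
    (reduceMod 2 (value (0, 0, 0, 0))) where
  apply_coboundary y hy := by
    simp at hy
    simp
    omega
  exists_primitive x hx hdx hpx := by
    obtain ⟨s, hs⟩ := (reduceMod_eq_zero_iff ..).1 hpx
    refine ⟨fun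
      | (0, 0, 0, 0) => -s
      | (0, 0, 0, 1) => x (0, 0, 1, 0) - s
      | _ => 0, by simp, ?_⟩
    simp at hx hdx hs ⊢
    omega
  exists_cocycle := by
    intro s
    obtain ⟨s, rfl⟩ := ZMod.intCast_surjective s
    refine ⟨fun
      | (0, 0, 0, 0) => s
      | (0, 0, 0, 1) => s
      | _ => 0, by simp, by simp, by simp [reduceMod_apply]⟩

theorem computesCohomology_neg_one_two : ComputesCohomology (-1) 2
    (reduceMod 4 (2 • value (0, 0, 1, 1) - value (0, 1, 0, 0) - value (0, 1, 0, 1)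
      + 2 • value (1, 0, 0, 0) + value (1, 0, 1, 0) + value (1, 1, 0, 1))) where
  apply_coboundary y hy := by
    simp at hy
    simp
    omega
  exists_primitive x hx hdx hpx := by
    obtain ⟨s, hs⟩ := (reduceMod_eq_zero_iff ..).1 hpx
    refine ⟨fun
      | (0, 0, 0, 1) => x (1, 0, 0, 0)
      | (0, 0, 1, 0) => x (0, 0, 1, 1) - x (0, 1, 0, 1) - s
      | (0, 0, 1, 1) => s
      | (0, 1, 0, 0) => x (0, 1, 0, 0) - x (1, 0, 0, 0) + s
      | (0, 1, 0, 1) => x (0, 0, 1, 1) + x (1, 0, 0, 0) - s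
      | (1, 0, 0, 1) => -x (0, 0, 1, 1) + x (0, 1, 0, 1) - x (1, 0, 1, 0) + 2 * s
      | _ => 0, by simp, ?_⟩
    simp at hx hdx hs ⊢
    omega
  exists_cocycle := by
    intro s
    obtain ⟨s, rfl⟩ := ZMod.intCast_surjective s
    refine ⟨fun
      | (0, 1, 1, 0) => s
      | (0, 1, 1, 1) => -s
      | (1, 0, 0, 1) => s
      | (1, 1, 0, 0) => -s
      | (1, 1, 0, 1) => s
      | _ => 0, by simp, by simp, by simp [reduceMod_apply]⟩

set_option maxHeartbeats 1000000 in
-- The coboundary unfolds to one equation for each of the sixteen orbits.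
theorem computesCohomology_neg_one_three_or_five {n : ℕ} (hn : n = 3 ∨ n = 5) :
    ComputesCohomology (-1) n
    ((reduceMod 2 (value (0, 0, 0, 1))).prod
      (reduceMod 2 (value (0, 1, 0, 0) - value (0, 1, 1, 0) + value (1, 0, 0, 1)
        - value (1, 1, 0, 0) + value (1, 1, 0, 1) + value (1, 1, 1, 0)))) where
  apply_coboundary y hy := by
    rcases hn with rfl | rfl
    all_goals
      simp at hy
      simp
      omega
  exists_primitive x _ hdx hpx := by
    rcases hn with rfl | rfl
    all_goals
      simp only [AddMonoidHom.prod_apply, Prod.mk_eq_zero, reduceMod_eq_zero_iff] at hpx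
      obtain ⟨⟨s, hs⟩, ⟨t, ht⟩⟩ := hpx
      refine ⟨fun
        | (0, 0, 0, 0) => x (1, 0, 0, 1) - s
        | (0, 0, 0, 1) => -s
        | (0, 0, 1, 1) => -x (0, 1, 0, 0) - x (1, 0, 0, 1)
        | (0, 1, 1, 0) => -x (0, 1, 0, 0) - x (0, 1, 1, 0) - x (1, 0, 0, 1) - x (1, 0, 1, 0) - t
        | (0, 1, 1, 1) => x (1, 0, 1, 0) + t
        | (1, 0, 0, 1) => -x (1, 1, 0, 0)
        | (1, 0, 1, 0) => -x (0, 1, 0, 0) - x (1, 0, 0, 1) - x (1, 0, 1, 0) + x (1, 1, 0, 0)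
        | (1, 1, 0, 1) => -x (0, 1, 0, 0) - x (1, 0, 0, 1) - x (1, 0, 1, 0) - x (1, 1, 0, 1)
        | _ => 0, by simp, ?_⟩
      simp at hdx hs ht ⊢
      omega
  exists_cocycle := by
    rcases hn with rfl | rfl
    all_goals
      rintro ⟨s, t⟩
      obtain ⟨s, rfl⟩ := ZMod.intCast_surjective s
      obtain ⟨t, rfl⟩ := ZMod.intCast_surjective t
      refine ⟨fun
        | (0, 0, 0, 0) => s
        | (0, 0, 0, 1) => s
        | (1, 1, 1, 0) => t
        | (1, 1, 1, 1) => -t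
        | _ => 0, by simp, by simp, by simp [reduceMod_apply]⟩

set_option maxHeartbeats 1000000 in
-- The coboundary unfolds to one equation for each of the sixteen orbits.
theorem computesCohomology_neg_one_four : ComputesCohomology (-1) 4
    ((reduceMod 2 (value (1, 0, 0, 0) + value (1, 0, 0, 1))).prod
      (reduceMod 2 (value (0, 1, 1, 0) - value (0, 0, 1, 0) - value (0, 0, 1, 1)))) where
  apply_coboundary y _ := by
    simp
    omega
  exists_primitive x _ hdx hpx := by
    simp only [AddMonoidHom.prod_apply, Prod.mk_eq_zero, reduceMod_eq_zero_iff] at hpx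
    obtain ⟨⟨s, hs⟩, ⟨t, ht⟩⟩ := hpx
    refine ⟨fun
      | (0, 0, 0, 0) => x (1, 0, 0, 1)
      | (0, 0, 1, 0) => -x (0, 1, 0, 1) + x (1, 0, 0, 1)
      | (0, 0, 1, 1) => x (0, 0, 1, 1) - x (1, 0, 0, 1)
      | (0, 1, 0, 0) => x (0, 0, 1, 0) + x (0, 1, 0, 1)
      | (0, 1, 1, 0) => -x (0, 1, 0, 1) + x (1, 0, 0, 1) + t
      | (1, 0, 0, 0) => s
      | (1, 1, 0, 0) => x (0, 0, 1, 0) + x (0, 1, 0, 1) + x (1, 1, 0, 0) - s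
      | (1, 1, 1, 0) => -x (0, 0, 1, 0) - x (1, 0, 0, 1) - x (1, 1, 0, 0) + x (1, 1, 1, 1) + s - t
      | _ => 0, by simp, ?_⟩
    simp at hdx hs ht ⊢
    omega
  exists_cocycle := by
    rintro ⟨s, t⟩
    obtain ⟨s, rfl⟩ := ZMod.intCast_surjective s
    obtain ⟨t, rfl⟩ := ZMod.intCast_surjective t
    refine ⟨fun
      | (0, 1, 1, 0) => t
      | (0, 1, 1, 1) => -t
      | (1, 0, 0, 0) => s
      | (1, 0, 1, 0) => s
      | (1, 0, 1, 1) => -s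
      | (1, 1, 1, 0) => s - t
      | _ => 0, by simp, ?_, by simp [reduceMod_apply]⟩
    simp
    omega

theorem computesCohomology_neg_one_zero :
    ComputesCohomology (-1) 0 (0 : (CubeOrbit → ℤ) →+ PUnit) where
  apply_coboundary _ _ := rfl
  exists_primitive x hx hdx _ := by
    refine ⟨0, by simp, ?_⟩
    simp at hx hdx ⊢
    omega
  exists_cocycle _ := ⟨0, by simp, by simp, rfl⟩

end Cases

end CubeOrbit

section Cohomology

open CubeOrbit

theorem nonempty_H_addEquiv_four_add (k : ℕ) :
    Nonempty (H (4 + 2 * k) ≃+ (ZMod 4 × ZMod 2) × ZMod 2 × ZMod 2) := by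
  cases k with
  | zero =>
    exact nonempty_H_addEquiv computesCohomology_one_four
      (computesCohomology_neg_one_three_or_five (.inl rfl))
  | succ k =>
    have one := computesCohomology_one_four.add_two_mul le_rfl (k + 1)
    rw [show 4 + 2 * (k + 1) = 5 + 2 * k + 1 by ring] at one ⊢
    exact nonempty_H_addEquiv one
      ((computesCohomology_neg_one_three_or_five (.inr rfl)).add_two_mul (by decide) k)

theorem nonempty_H_addEquiv_five_add (k : ℕ) :
    Nonempty (H (5 + 2 * k) ≃+ (ZMod 4 × ZMod 2) × ZMod 2 × ZMod 2) := by
  have one := computesCohomology_one_five.add_two_mul (by decide) k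
  rw [show 5 + 2 * k = 4 + 2 * k + 1 by ring] at one ⊢
  exact nonempty_H_addEquiv one (computesCohomology_neg_one_four.add_two_mul le_rfl k)

theorem nonempty_H_addEquiv_of_four_le {n : ℕ} (hn : 4 ≤ n) :
    Nonempty (H n ≃+ (ZMod 4 × ZMod 2) × ZMod 2 × ZMod 2) := by
  obtain ⟨k, rfl | rfl⟩ : ∃ k, n = 4 + 2 * k ∨ n = 5 + 2 * k := ⟨(n - 4) / 2, by omega⟩
  · exact nonempty_H_addEquiv_four_add k
  · exact nonempty_H_addEquiv_five_add k

/-- Triples as functions on `Fin 3`. -/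
def finThreeAddEquiv (A : Type*) [AddCommGroup A] : A × A × A ≃+ (Fin 3 → A) where
  toFun x := ![x.1, x.2.1, x.2.2]
  invFun f := (f 0, f 1, f 2)
  left_inv _ := rfl
  right_inv f := by ext i; fin_cases i <;> rfl
  map_add' x y := by ext i; fin_cases i <;> rfl

end Cohomology

theorem cohomology_of_first_counterexample :
    Nonempty (H 1 ≃+ ℤ) ∧
    Nonempty (H 2 ≃+ (ℤ × ZMod 4 × ZMod 2)) ∧
    Nonempty (H 3 ≃+ (ℤ × ZMod 4 × ZMod 2)) ∧
    (∀ i, 4 ≤ i → Nonempty (H i ≃+ (ZMod 4 × (Fin 3 → ZMod 2)))) := by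
  open CubeOrbit in
  refine ⟨?_, ?_, ?_, fun i hi ↦ ?_⟩
  · obtain ⟨e⟩ := nonempty_H_addEquiv computesCohomology_one_one computesCohomology_neg_one_zero.{0}
    exact ⟨e.trans .prodUnique⟩
  · obtain ⟨e⟩ := nonempty_H_addEquiv computesCohomology_one_two computesCohomology_neg_one_one
    exact ⟨e.trans .prodAssoc⟩
  · obtain ⟨e⟩ := nonempty_H_addEquiv computesCohomology_one_three computesCohomology_neg_one_two
    exact ⟨e.trans (.trans .prodAssoc (.prodCongr (.refl ℤ) .prodComm))⟩
  · obtain ⟨e⟩ := nonempty_H_addEquiv_of_four_le hi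
    exact ⟨e.trans (.trans .prodAssoc (.prodCongr (.refl _) (finThreeAddEquiv _)))⟩
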